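/- Maximum principle: let u ∈ W satisfy ∫_Ω A∇u·∇φ dx ≥ 0 for every nonnegative φ ∈ C_c^∞(Ω) (i.e., u is a supersolution of Lu = 0 in Ω), and suppose Tu ≥ 0 σ-almost everywhere on Γ. Then u ≥ 0 almost everywhere in Ω. -/

import Mathlib

open MeasureTheory Metric Set Filter
open scoped ENNReal NNReal Topology

noncomputable section

/-- Euclidean space `ℝⁿ`. -/
abbrev Euc (n : ℕ) := EuclideanSpace ℝ (Fin n)

/-- `Γ ⊆ ℝⁿ` is `d`-Ahlfors regular with constant `C₀`. -/
def AhlforsRegular (n : ℕ) (d C₀ : ℝ) (Γ : Set (Euc n)) : Prop :=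
  ∀ x ∈ Γ, ∀ r : ℝ, 0 < r →
    ENNReal.ofReal (C₀⁻¹ * r ^ d) ≤ μH[d] (Γ ∩ ball x r) ∧
      μH[d] (Γ ∩ ball x r) ≤ ENNReal.ofReal (C₀ * r ^ d)

/-- The weight `w(x) = dist(x, Γ) ^ (d + 1 - n)`. -/
def weightW (n : ℕ) (d : ℝ) (Γ : Set (Euc n)) (x : Euc n) : ℝ :=
  infDist x Γ ^ (d + 1 - (n : ℝ))

/-- The measure `m` with density `w` with respect to Lebesgue measure. -/
def measW (n : ℕ) (d : ℝ) (Γ : Set (Euc n)) : Measure (Euc n) :=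
  volume.withDensity fun x => ENNReal.ofReal (weightW n d Γ x)

/-- `v` is a distributional gradient of `u` on the open set `E`: for every smooth
compactly supported test function `φ` with support in `E`, `∫_E u ∇φ = -∫_E φ v`. -/
def IsDistribGradOn {n : ℕ} (u : Euc n → ℝ) (v : Euc n → Euc n) (E : Set (Euc n)) : Prop :=
  ∀ φ : Euc n → ℝ, ContDiff ℝ (⊤ : ℕ∞) φ → HasCompactSupport φ → tsupport φ ⊆ E →
    ∫ x in E, u x • gradient φ x = -∫ x in E, φ x • v x

/-- The averages of `u` over small balls centered at `x` converge to `t`. -/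
def HasTraceAt {n : ℕ} (u : Euc n → ℝ) (x : Euc n) (t : ℝ) : Prop :=
  Tendsto (fun ρ : ℝ => ⨍ y in ball x ρ, u y) (𝓝[>] (0 : ℝ)) (𝓝 t)

/-- `u` belongs to the weighted Sobolev space `W = Ẇ^{1,2}_w(Ω)`, `Ω = Γᶜ`, with
distributional gradient `v` on `Ω` lying in `L²(Ω, m)`. -/
structure MemW (n : ℕ) (d : ℝ) (Γ : Set (Euc n)) (u : Euc n → ℝ) (v : Euc n → Euc n) :
    Prop where
  locInt : LocallyIntegrableOn u Γᶜ volume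
  gradLocInt : LocallyIntegrableOn v Γᶜ volume
  isGrad : IsDistribGradOn u v Γᶜ
  l2 : ∫⁻ x in Γᶜ, ENNReal.ofReal (‖v x‖ ^ 2) ∂(measW n d Γ) < ⊤

/-- `u` belongs to the local space `W_r(E)`: `u ∈ L¹_loc(E)` and `φ u` (extended by `0`)
belongs to `W` for every smooth compactly supported `φ` with support in `E`. -/
def MemWrOn (n : ℕ) (d : ℝ) (Γ : Set (Euc n)) (E : Set (Euc n)) (u : Euc n → ℝ) : Prop :=
  LocallyIntegrableOn u E volume ∧
    ∀ φ : Euc n → ℝ, ContDiff ℝ (⊤ : ℕ∞) φ → HasCompactSupport φ → tsupport φ ⊆ E →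
      ∃ vφ : Euc n → Euc n, MemW n d Γ (fun x => φ x * u x) vφ

/-- Degenerate ellipticity and boundedness conditions for the matrix `A`. -/
def EllipticOn (n : ℕ) (d : ℝ) (Γ : Set (Euc n)) (A : Euc n → Euc n →L[ℝ] Euc n)
    (C₁ : ℝ) : Prop :=
  ∀ x, x ∉ Γ →
    (∀ ξ ζ : Euc n, |∑ i, A x ξ i * ζ i| ≤ C₁ * weightW n d Γ x * ‖ξ‖ * ‖ζ‖) ∧
      ∀ ξ : Euc n, C₁⁻¹ * weightW n d Γ x * ‖ξ‖ ^ 2 ≤ ∑ i, A x ξ i * ξ i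

/-- `u`, with gradient `v`, is a weak subsolution of `- div A ∇u = 0` on `U ⊆ Ω = Γᶜ`. -/
def SubsolOn {n : ℕ} (Γ : Set (Euc n)) (A : Euc n → Euc n →L[ℝ] Euc n)
    (v : Euc n → Euc n) (U : Set (Euc n)) : Prop :=
  ∀ φ : Euc n → ℝ, ContDiff ℝ (⊤ : ℕ∞) φ → HasCompactSupport φ → tsupport φ ⊆ U →
    (∀ x, 0 ≤ φ x) → ∫ x in Γᶜ, ∑ i, A x (v x) i * gradient φ x i ≤ 0

/-- `u`, with gradient `v`, is a weak supersolution of `- div A ∇u = 0` on `U ⊆ Ω = Γᶜ`. -/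
def SupersolOn {n : ℕ} (Γ : Set (Euc n)) (A : Euc n → Euc n →L[ℝ] Euc n)
    (v : Euc n → Euc n) (U : Set (Euc n)) : Prop :=
  ∀ φ : Euc n → ℝ, ContDiff ℝ (⊤ : ℕ∞) φ → HasCompactSupport φ → tsupport φ ⊆ U →
    (∀ x, 0 ≤ φ x) → 0 ≤ ∫ x in Γᶜ, ∑ i, A x (v x) i * gradient φ x i

/-- `u`, with gradient `v`, is a weak solution of `- div A ∇u = 0` on `U ⊆ Ω = Γᶜ`. -/
def SolOn {n : ℕ} (Γ : Set (Euc n)) (A : Euc n → Euc n →L[ℝ] Euc n)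
    (v : Euc n → Euc n) (U : Set (Euc n)) : Prop :=
  ∀ φ : Euc n → ℝ, ContDiff ℝ (⊤ : ℕ∞) φ → HasCompactSupport φ → tsupport φ ⊆ U →
    ∫ x in Γᶜ, ∑ i, A x (v x) i * gradient φ x i = 0


open scoped Convolution Gradient
open ContinuousLinearMap (lsmul)

/-- mollifier bump -/
def rhoB (n j : ℕ) : ContDiffBump (0 : Euc n) where
  rIn := 1 / (2 * ((j : ℝ) + 1))
  rOut := 1 / ((j : ℝ) + 1)
  rIn_pos := by positivity
  rIn_lt_rOut := by
    apply one_div_lt_one_div_of_lt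
    · positivity
    · have : (0 : ℝ) ≤ j := Nat.cast_nonneg j
      linarith

/-- mollifier kernel -/
def rhoK (n j : ℕ) : Euc n → ℝ := (rhoB n j).normed volume

/-- mollification -/
def moll {n : ℕ} {G : Type*} [NormedAddCommGroup G] [NormedSpace ℝ G] (j : ℕ) (f : Euc n → G) :
    Euc n → G := rhoK n j ⋆[lsmul ℝ ℝ, volume] f

/-- weak gradient with test functions in `U` -/
def WG {n : ℕ} (U : Set (Euc n)) (u : Euc n → ℝ) (V : Euc n → Euc n) : Prop :=
  ∀ φ : Euc n → ℝ, ContDiff ℝ (⊤ : ℕ∞) φ → HasCompactSupport φ → tsupport φ ⊆ U →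
    ∫ x, u x • gradient φ x = -∫ x, φ x • V x

lemma hasGrad_of {n : ℕ} {f : Euc n → ℝ} {g x : Euc n} {L : Euc n →L[ℝ] ℝ}
    (h : HasFDerivAt f L x) (hL : ∀ y, L y = inner ℝ g y) : HasGradientAt f g x := by
  rw [hasGradientAt_iff_hasFDerivAt]
  have : (InnerProductSpace.toDual ℝ (Euc n)) g = L := by
    refine ContinuousLinearMap.ext fun y => ?_
    rw [hL, InnerProductSpace.toDual_apply_apply]
  rw [this]; exact h

lemma grad_cont {n : ℕ} {φ : Euc n → ℝ} (hφ : ContDiff ℝ (⊤ : ℕ∞) φ) : Continuous (gradient φ) := by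
  have : gradient φ = fun t => (InnerProductSpace.toDual ℝ (Euc n)).symm (fderiv ℝ φ t) := rfl
  rw [this]
  exact (LinearIsometryEquiv.continuous _).comp (hφ.continuous_fderiv (by simp))

lemma grad_cpt {n : ℕ} {φ : Euc n → ℝ} (hφ : HasCompactSupport φ) :
    HasCompactSupport (gradient φ) :=
  (hφ.fderiv ℝ).comp_left (g := (InnerProductSpace.toDual ℝ (Euc n)).symm) (by simp)

lemma moll_eq {n : ℕ} {G : Type*} [NormedAddCommGroup G] [NormedSpace ℝ G] (j : ℕ) (f : Euc n → G)
    (x : Euc n) : moll j f x = ∫ t, rhoK n j t • f (x - t) := by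
  simp [moll, convolution_def]

lemma moll_eq_swap {n : ℕ} {G : Type*} [NormedAddCommGroup G] [NormedSpace ℝ G] (j : ℕ)
    (f : Euc n → G) (x : Euc n) : moll j f x = ∫ t, rhoK n j (x - t) • f t := by
  simp [moll, convolution_eq_swap]

lemma rhoB_tendsto (n : ℕ) : Tendsto (fun j => (rhoB n j).rOut) atTop (𝓝 0) :=
  tendsto_one_div_add_atTop_nhds_zero_nat

lemma moll_ae {n : ℕ} {G : Type*} [NormedAddCommGroup G] [NormedSpace ℝ G] [CompleteSpace G]
    {f : Euc n → G} (hf : LocallyIntegrable f volume) :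
    ∀ᵐ x, Tendsto (fun j => moll j f x) atTop (𝓝 (f x)) := by
  apply ContDiffBump.ae_convolution_tendsto_right_of_locallyIntegrable (K := 2) (rhoB_tendsto n) _ hf
  filter_upwards with j
  simp only [rhoB]
  rw [← div_eq_mul_one_div, div_mul_eq_div_div]
  norm_num

lemma rhoK_nonneg (n j : ℕ) (x) : 0 ≤ rhoK n j x := (rhoB n j).nonneg_normed x

lemma rhoK_contDiff (n j : ℕ) : ContDiff ℝ (⊤ : ℕ∞) (rhoK n j) := (rhoB n j).contDiff_normed

lemma rhoK_cpt (n j : ℕ) : HasCompactSupport (rhoK n j) := (rhoB n j).hasCompactSupport_normed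

lemma rhoK_tsupport (n j : ℕ) : tsupport (rhoK n j) = closedBall 0 (1 / ((j : ℝ) + 1)) :=
  (rhoB n j).tsupport_normed_eq

lemma rhoK_zero {n j : ℕ} {x : Euc n} (hx : 1 / ((j : ℝ) + 1) ≤ ‖x‖) : rhoK n j x = 0 := by
  by_contra h
  have : x ∈ Function.support (rhoK n j) := h
  rw [rhoK, (rhoB n j).support_normed_eq] at this
  simp [rhoB] at this
  simp at hx
  linarith

lemma rhoK_integral (n j : ℕ) : ∫ x, rhoK n j x = 1 := (rhoB n j).integral_normed

lemma rhoK_lintegral (n j : ℕ) : ∫⁻ x, ENNReal.ofReal (rhoK n j x) = 1 := by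
  rw [← ofReal_integral_eq_lintegral_ofReal, rhoK_integral]
  · simp
  · exact (rhoB n j).integrable_normed
  · exact Eventually.of_forall (rhoK_nonneg n j)

lemma moll_contDiff {n : ℕ} (j : ℕ) {u : Euc n → ℝ} (hu : LocallyIntegrable u volume) :
    ContDiff ℝ (⊤ : ℕ∞) (moll j u) :=
  (rhoK_cpt n j).contDiff_convolution_left _ (rhoK_contDiff n j) hu

lemma moll_grad {n : ℕ} (j : ℕ) {u : Euc n → ℝ} {V : Euc n → Euc n} {U : Set (Euc n)}
    (hu : LocallyIntegrable u volume) (h : WG U u V) {x : Euc n}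
    (hx : closedBall x (1 / ((j : ℝ) + 1)) ⊆ U) :
    HasGradientAt (moll j u) (moll j V x) x := by
  rw [hasGradientAt_iff_hasFDerivAt]
  have h1 := (rhoK_cpt n j).hasFDerivAt_convolution_left (lsmul ℝ ℝ) (μ := volume)
    ((rhoK_contDiff n j).of_le (by exact_mod_cast le_top)) hu x
  suffices hs : (InnerProductSpace.toDual ℝ (Euc n)) (moll j V x) =
    (fderiv ℝ (rhoK n j) ⋆[ContinuousLinearMap.precompL (Euc n) (lsmul ℝ ℝ), volume] u) x by
    rw [hs]; exact h1
  refine ContinuousLinearMap.ext fun y => ?_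
  have hd : Differentiable ℝ (rhoK n j) := (rhoK_contDiff n j).differentiable (by simp)
  have hex := ((rhoK_cpt n j).fderiv ℝ).convolutionExists_left
    (ContinuousLinearMap.precompL (Euc n) (lsmul ℝ ℝ)) (μ := volume)
    ((rhoK_contDiff n j).continuous_fderiv (by simp)) hu x
  rw [convolution_def, ContinuousLinearMap.integral_apply hex]
  simp only [InnerProductSpace.toDual_apply_apply, ContinuousLinearMap.precompL_apply,
    ContinuousLinearMap.lsmul_apply, smul_eq_mul]
  rw [← integral_sub_left_eq_self _ volume x]
  simp only [sub_sub_cancel]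
  set φ : Euc n → ℝ := fun t => rhoK n j (x - t) with hφ
  have hφc : ContDiff ℝ (⊤ : ℕ∞) φ := (rhoK_contDiff n j).comp (contDiff_const.sub contDiff_id)
  have hφs : tsupport φ ⊆ closedBall x (1 / ((j : ℝ) + 1)) := by
    apply closure_minimal _ isClosed_closedBall
    intro t ht
    rw [Function.mem_support] at ht
    by_contra hh
    apply ht
    apply rhoK_zero
    rw [mem_closedBall, dist_eq_norm, norm_sub_rev] at hh
    linarith
  have hφk : HasCompactSupport φ :=
    (isCompact_closedBall x _).of_isClosed_subset (isClosed_tsupport _) hφs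
  have hgr : ∀ t, gradient φ t = - gradient (rhoK n j) (x - t) := by
    intro t
    apply HasGradientAt.gradient
    refine hasGrad_of ((hd (x - t)).hasFDerivAt.comp t
      ((hasFDerivAt_const x t).sub (hasFDerivAt_id t))) fun z => ?_
    simp [inner_gradient_left]
  have h2 := h φ hφc hφk (hφs.trans hx)
  have h3 : moll j V x = - ∫ t, u t • gradient φ t := by
    rw [h2, moll_eq_swap, neg_neg]
  have hint : Integrable (fun t => u t • gradient φ t) := by
    apply hu.integrable_smul_right_of_hasCompactSupport
    · exact grad_cont hφc
    · exact grad_cpt hφk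
  rw [h3, inner_neg_left, real_inner_comm, ← integral_inner hint, ← integral_neg]
  congr 1
  ext t
  rw [real_inner_smul_right, hgr, inner_neg_right, real_inner_comm, inner_gradient_left]
  ring

lemma cs_lint {α : Type*} [MeasurableSpace α] {μ : Measure α} {f g : α → ℝ≥0∞}
    (hf : AEMeasurable f μ) (hg : AEMeasurable g μ) :
    (∫⁻ x, f x * g x ∂μ) ^ 2 ≤ (∫⁻ x, f x ^ 2 ∂μ) * ∫⁻ x, g x ^ 2 ∂μ := by
  have h := ENNReal.lintegral_mul_le_Lp_mul_Lq μ Real.HolderConjugate.two_two hf hg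
  simp only [Pi.mul_apply] at h
  have h2 := pow_le_pow_left' h 2
  refine h2.trans (le_of_eq ?_)
  rw [mul_pow, ← ENNReal.rpow_natCast, ← ENNReal.rpow_natCast, ← ENNReal.rpow_mul,
    ← ENNReal.rpow_mul]
  norm_num

lemma ennreal_add_sq (a b : ℝ≥0∞) : (a + b) ^ 2 ≤ 2 * a ^ 2 + 2 * b ^ 2 := by
  rcases eq_or_ne a ⊤ with rfl | ha
  · simp
  rcases eq_or_ne b ⊤ with rfl | hb
  · simp
  lift a to ℝ≥0 using ha
  lift b to ℝ≥0 using hb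
  norm_cast
  rw [← NNReal.coe_le_coe]
  push_cast
  nlinarith [sq_nonneg ((a : ℝ) - b)]

lemma moll_jensen {n : ℕ} {G : Type*} [NormedAddCommGroup G] [NormedSpace ℝ G] (j : ℕ)
    {f : Euc n → G} (hf : AEStronglyMeasurable f volume) (x : Euc n) :
    ‖moll j f x‖ₑ ^ 2 ≤ ∫⁻ t, ENNReal.ofReal (rhoK n j t) * ‖f (x - t)‖ₑ ^ 2 := by
  have hm : AEMeasurable (fun t => ‖f (x - t)‖ₑ) volume := by
    have := (hf.comp_quasiMeasurePreserving
      (quasiMeasurePreserving_sub_left_of_right_invariant volume x)).enorm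
    exact this
  have hρ : Measurable (fun t => ENNReal.ofReal (rhoK n j t)) :=
    ((rhoK_contDiff n j).continuous.measurable).ennreal_ofReal
  have h1 : ‖moll j f x‖ₑ ≤ ∫⁻ t, ENNReal.ofReal (rhoK n j t) ^ (1/2 : ℝ) *
      (ENNReal.ofReal (rhoK n j t) ^ (1/2 : ℝ) * ‖f (x - t)‖ₑ) := by
    rw [moll_eq]
    refine (enorm_integral_le_lintegral_enorm _).trans (le_of_eq ?_)
    congr 1
    ext t
    rw [enorm_smul, ← mul_assoc, ← ENNReal.rpow_add_of_nonneg _ _ (by norm_num) (by norm_num),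
      Real.enorm_of_nonneg (rhoK_nonneg n j t)]
    norm_num
  refine (pow_le_pow_left' h1 2).trans ((cs_lint ?_ ?_).trans ?_)
  · exact (hρ.pow_const _).aemeasurable
  · exact ((hρ.pow_const _).aemeasurable).mul hm
  · have e : ∀ t, (ENNReal.ofReal (rhoK n j t) ^ (1/2 : ℝ)) ^ 2 = ENNReal.ofReal (rhoK n j t) := by
      intro t
      rw [← ENNReal.rpow_natCast, ← ENNReal.rpow_mul]; norm_num
    simp only [mul_pow, e, rhoK_lintegral, one_mul]
    exact le_rfl

lemma moll_lint {n : ℕ} (j : ℕ) {g : Euc n → ℝ≥0∞} (hg : AEMeasurable g volume) :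
    ∫⁻ x, ∫⁻ t, ENNReal.ofReal (rhoK n j t) * g (x - t) = ∫⁻ x, g x := by
  have hρ : Measurable (fun t => ENNReal.ofReal (rhoK n j t)) :=
    ((rhoK_contDiff n j).continuous.measurable).ennreal_ofReal
  rw [lintegral_lintegral_swap]
  · have : ∀ t, ∫⁻ x, ENNReal.ofReal (rhoK n j t) * g (x - t) =
        ENNReal.ofReal (rhoK n j t) * ∫⁻ x, g x := by
      intro t
      rw [lintegral_const_mul' _ _ ENNReal.ofReal_ne_top, lintegral_sub_right_eq_self g t]
    simp only [this]
    rw [lintegral_mul_const _ hρ, rhoK_lintegral, one_mul]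
  · apply AEMeasurable.mul
    · exact (hρ.comp measurable_snd).aemeasurable
    · exact hg.comp_quasiMeasurePreserving
        (quasiMeasurePreserving_sub_of_right_invariant volume volume)

lemma moll_L2 {n : ℕ} {G : Type*} [NormedAddCommGroup G] [NormedSpace ℝ G] [CompleteSpace G]
    {f : Euc n → G} (hf : AEStronglyMeasurable f volume) (h2 : ∫⁻ x, ‖f x‖ₑ ^ 2 < ⊤) :
    Tendsto (fun j => ∫⁻ x, ‖moll j f x - f x‖ₑ ^ 2) atTop (𝓝 0) := by
  have hmem : MemLp f 2 volume := by
    refine ⟨hf, ?_⟩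
    rw [eLpNorm_lt_top_iff_lintegral_rpow_enorm_lt_top (by norm_num) (by norm_num)]
    simpa using h2
  have hloc : LocallyIntegrable f volume := hmem.locallyIntegrable (by norm_num)
  have hgi : Integrable (fun x => ‖f x‖ ^ 2) volume := hmem.integrable_norm_pow (by norm_num)
  set I := ∫⁻ x, ‖f x‖ₑ ^ 2 with hI
  set Gj : ℕ → Euc n → ℝ≥0∞ := fun j x => ∫⁻ t, ENNReal.ofReal (rhoK n j t) * ‖f (x - t)‖ₑ ^ 2
    with hGj
  have hG : ∀ j x, Gj j x = ENNReal.ofReal (moll j (fun x => ‖f x‖ ^ 2) x) := by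
    intro j x
    rw [moll_eq, ofReal_integral_eq_lintegral_ofReal]
    · simp only [hGj]
      congr 1; ext t
      rw [smul_eq_mul, ENNReal.ofReal_mul (rhoK_nonneg n j t), ENNReal.ofReal_pow (norm_nonneg _),
        ofReal_norm]
    · exact (rhoK_cpt n j).convolutionExists_left (lsmul ℝ ℝ) (rhoK_contDiff n j).continuous
        hgi.locallyIntegrable x
    · exact Eventually.of_forall fun t => smul_nonneg (rhoK_nonneg n j t) (by positivity)
  have hfm : AEMeasurable (fun x => ‖f x‖ₑ ^ 2) volume := hf.enorm.pow_const 2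
  have hGI : ∀ j, ∫⁻ x, Gj j x = I := fun j => moll_lint j hfm
  have hmc : ∀ j, Continuous (moll j f) := fun j =>
    (rhoK_cpt n j).continuous_convolution_left (lsmul ℝ ℝ) (rhoK_contDiff n j).continuous hloc
  set A : ℕ → Euc n → ℝ≥0∞ := fun j x => ‖moll j f x - f x‖ₑ ^ 2 with hA
  have hAm : ∀ j, AEMeasurable (A j) volume := fun j =>
    (((hmc j).aestronglyMeasurable).sub hf).enorm.pow_const 2
  have hmg : ∀ j, Continuous (moll j (fun x => ‖f x‖ ^ 2)) := fun j =>
    (rhoK_cpt n j).continuous_convolution_left (lsmul ℝ ℝ) (rhoK_contDiff n j).continuous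
        hgi.locallyIntegrable
  have hGm : ∀ j, Measurable (Gj j) := fun j => by
    have : Gj j = fun x => ENNReal.ofReal (moll j (fun x => ‖f x‖ ^ 2) x) := funext (hG j)
    rw [this]
    exact (hmg j).measurable.ennreal_ofReal
  have hle : ∀ j x, A j x ≤ 2 * Gj j x + 2 * ‖f x‖ₑ ^ 2 := by
    intro j x
    calc A j x ≤ (‖moll j f x‖ₑ + ‖f x‖ₑ) ^ 2 := pow_le_pow_left' enorm_sub_le 2
      _ ≤ 2 * ‖moll j f x‖ₑ ^ 2 + 2 * ‖f x‖ₑ ^ 2 := ennreal_add_sq _ _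
      _ ≤ _ := by gcongr; exact moll_jensen j hf x
  set S : ℕ → Euc n → ℝ≥0∞ := fun j x => 2 * Gj j x + 2 * ‖f x‖ₑ ^ 2 with hS
  have hSI : ∀ j, ∫⁻ x, S j x = 4 * I := by
    intro j
    rw [hS, lintegral_add_left ((hGm j).const_mul 2), lintegral_const_mul' _ _ (by norm_num),
      lintegral_const_mul' _ _ (by norm_num), hGI, ← hI]
    ring
  have hSm : ∀ j, AEMeasurable (S j) volume := fun j =>
    ((hGm j).const_mul 2).aemeasurable.add (hfm.const_mul 2)
  have hsum : ∀ j, (∫⁻ x, (S j x - A j x)) + ∫⁻ x, A j x = 4 * I := by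
    intro j
    have e := lintegral_add_left' ((hSm j).sub (hAm j)) (A j)
    simp only [Pi.sub_apply] at e
    rw [← e, ← hSI j]
    congr 1; ext x
    exact tsub_add_cancel_of_le (hle j x)
  have hlim : ∀ᵐ x, Tendsto (fun j => S j x - A j x) atTop (𝓝 (4 * ‖f x‖ₑ ^ 2)) := by
    filter_upwards [moll_ae hloc, moll_ae hgi.locallyIntegrable] with x h1 h2
    have hA0 : Tendsto (fun j => A j x) atTop (𝓝 0) := by
      have : Tendsto (fun j => ‖moll j f x - f x‖ₑ ^ 2) atTop (𝓝 (‖f x - f x‖ₑ ^ 2)) :=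
        (ENNReal.continuous_pow 2).tendsto _ |>.comp (h1.sub_const (f x)).enorm
      simpa using this
    have hG0 : Tendsto (fun j => Gj j x) atTop (𝓝 (‖f x‖ₑ ^ 2)) := by
      simp only [hG]
      have := ENNReal.tendsto_ofReal h2
      rwa [ENNReal.ofReal_pow (norm_nonneg _), ofReal_norm] at this
    have hS0 : Tendsto (fun j => S j x) atTop (𝓝 (2 * ‖f x‖ₑ ^ 2 + 2 * ‖f x‖ₑ ^ 2)) :=
      (ENNReal.Tendsto.const_mul hG0 (Or.inr (by norm_num))).add tendsto_const_nhds
    have := ENNReal.Tendsto.sub hS0 hA0 (Or.inr (by norm_num))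
    convert this using 2
    rw [tsub_zero]; ring
  have hfatou : 4 * I ≤ liminf (fun j => ∫⁻ x, (S j x - A j x)) atTop := by
    calc 4 * I = ∫⁻ x, 4 * ‖f x‖ₑ ^ 2 := by rw [lintegral_const_mul' _ _ (by norm_num)]
      _ = ∫⁻ x, liminf (fun j => S j x - A j x) atTop := by
        apply lintegral_congr_ae
        filter_upwards [hlim] with x hx
        exact hx.liminf_eq.symm
      _ ≤ _ := lintegral_liminf_le' fun j => (hSm j).sub (hAm j)
  have hIt : 4 * I ≠ ⊤ := ENNReal.mul_ne_top (by norm_num) h2.ne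
  rw [ENNReal.tendsto_nhds_zero]
  intro ε hε
  rcases eq_or_ne I 0 with h0 | h0
  · filter_upwards with j
    have := hsum j
    rw [h0, mul_zero, add_eq_zero] at this
    rw [this.2]; exact hε.le
  · have hlt : 4 * I - ε < liminf (fun j => ∫⁻ x, (S j x - A j x)) atTop := by
      refine lt_of_lt_of_le ?_ hfatou
      exact ENNReal.sub_lt_self hIt (mul_ne_zero (by norm_num) h0) hε.ne'
    filter_upwards [eventually_lt_of_lt_liminf hlt] with j hj
    have h3 := hsum j
    by_contra hcon
    push Not at hcon
    have hfin : ∫⁻ x, (S j x - A j x) ≠ ⊤ := fun h => hIt (by rw [← h3, h, top_add])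
    have : 4 * I < 4 * I := by
      calc 4 * I ≤ (4 * I - ε) + ε := le_tsub_add
        _ < (∫⁻ x, (S j x - A j x)) + ∫⁻ x, A j x := ENNReal.add_lt_add hj hcon
        _ = 4 * I := h3
    exact lt_irrefl _ this

/-- local square integrability -/
def L2loc {n : ℕ} {G : Type*} [NormedAddCommGroup G] (f : Euc n → G) : Prop :=
  AEStronglyMeasurable f volume ∧ ∀ R : ℝ, ∫⁻ x in ball 0 R, ‖f x‖ₑ ^ 2 < ⊤

lemma moll_congr {n : ℕ} {G : Type*} [NormedAddCommGroup G] [NormedSpace ℝ G] (j : ℕ)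
    {f g : Euc n → G} {x : Euc n} (h : ∀ y ∈ ball x 1, f y = g y) : moll j f x = moll j g x := by
  rw [moll_eq_swap, moll_eq_swap]
  congr 1; ext t
  by_cases ht : t ∈ ball x 1
  · rw [h t ht]
  · rw [rhoK_zero, zero_smul, zero_smul]
    rw [mem_ball, dist_eq_norm, norm_sub_rev] at ht
    push Not at ht
    refine le_trans ?_ ht
    rw [div_le_one (by positivity)]
    have : (0 : ℝ) ≤ j := Nat.cast_nonneg j
    linarith

lemma moll_L2loc {n : ℕ} {G : Type*} [NormedAddCommGroup G] [NormedSpace ℝ G] [CompleteSpace G]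
    {f : Euc n → G} (hf : L2loc f) (R : ℝ) :
    Tendsto (fun j => ∫⁻ x in ball 0 R, ‖moll j f x - f x‖ₑ ^ 2) atTop (𝓝 0) := by
  set g := (ball (0 : Euc n) (R + 1)).indicator f with hg
  have h1 : Tendsto (fun j => ∫⁻ x, ‖moll j g x - g x‖ₑ ^ 2) atTop (𝓝 0) := by
    apply moll_L2 (hf.1.indicator measurableSet_ball)
    refine lt_of_eq_of_lt ?_ (hf.2 (R + 1))
    rw [← lintegral_indicator measurableSet_ball]
    congr 1; ext x
    by_cases hx : x ∈ ball (0 : Euc n) (R + 1) <;> simp [hg, hx]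
  refine tendsto_of_tendsto_of_tendsto_of_le_of_le tendsto_const_nhds h1 (fun _ => zero_le) ?_
  intro j
  refine le_trans (le_of_eq ?_) (setLIntegral_le_lintegral (ball 0 R) _)
  apply setLIntegral_congr_fun measurableSet_ball
  intro x hx
  simp only [mem_ball, dist_zero_right] at hx
  have e1 : moll j f x = moll j g x := by
    apply moll_congr
    intro y hy
    rw [hg, indicator_of_mem]
    rw [mem_ball, dist_eq_norm] at hy
    rw [mem_ball, dist_zero_right]
    have := norm_add_le (y - x) x
    rw [sub_add_cancel] at this
    linarith
  have e2 : g x = f x := by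
    rw [hg, indicator_of_mem]
    rw [mem_ball, dist_zero_right]; linarith
  simp only [e1, e2]

lemma L2loc.locInt {n : ℕ} {G : Type*} [NormedAddCommGroup G] {f : Euc n → G} (hf : L2loc f) :
    LocallyIntegrable f volume := by
  intro x
  refine ⟨ball 0 (‖x‖ + 1), isOpen_ball.mem_nhds (by simp), ?_⟩
  have : MemLp f 2 (volume.restrict (ball 0 (‖x‖ + 1))) := by
    refine ⟨hf.1.restrict, ?_⟩
    rw [eLpNorm_lt_top_iff_lintegral_rpow_enorm_lt_top (by norm_num) (by norm_num)]
    simpa using hf.2 (‖x‖ + 1)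
  have : IsFiniteMeasure (volume.restrict (ball (0 : Euc n) (‖x‖ + 1))) :=
    ⟨by simpa using measure_ball_lt_top⟩
  exact MemLp.integrable (q := 2) (by norm_num) ‹_›

lemma ftc_sq {f f' : ℝ → ℝ} (hd : ∀ t, HasDerivAt f (f' t) t) (hc : Continuous f') {s : ℝ}
    (hs0 : 0 ≤ s) (hs1 : s ≤ 1) :
    ‖f 1 - f s‖ₑ ^ 2 ≤ ∫⁻ t in Ioc s 1, ‖f' t‖ₑ ^ 2 := by
  have h1 : f 1 - f s = ∫ t in Ioc s 1, f' t := by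
    rw [← intervalIntegral.integral_of_le hs1]
    exact (intervalIntegral.integral_eq_sub_of_hasDerivAt (fun t _ => hd t)
      (hc.intervalIntegrable _ _)).symm
  have h2 : ‖f 1 - f s‖ₑ ≤ ∫⁻ t in Ioc s 1, 1 * ‖f' t‖ₑ := by
    rw [h1]; simpa using enorm_integral_le_lintegral_enorm _
  refine (pow_le_pow_left' h2 2).trans ((cs_lint aemeasurable_const
    hc.measurable.enorm.aemeasurable).trans ?_)
  calc _ ≤ 1 * ∫⁻ t in Ioc s 1, ‖f' t‖ₑ ^ 2 := by
        gcongr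
        simp
        linarith
    _ = _ := one_mul _

lemma lint_smul {n : ℕ} {r : ℝ} (hr : r ≠ 0) (g : Euc n → ℝ≥0∞) :
    ∫⁻ z, g (r • z) = ENNReal.ofReal ((|r| ^ n)⁻¹) * ∫⁻ z, g z := by
  have h := Measure.map_addHaar_smul (volume : Measure (Euc n)) hr
  have e : ∫⁻ z, g z ∂(Measure.map (r • ·) (volume : Measure (Euc n))) = ∫⁻ z, g (r • z) :=
    MeasureTheory.lintegral_map_equiv g (Homeomorph.smulOfNeZero r hr).toMeasurableEquiv
  rw [← e, h, lintegral_smul_measure]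
  simp [abs_inv, abs_pow]

lemma seg_bound {n : ℕ} {f : Euc n → ℝ≥0∞} {c x : Euc n} {ρ τ : ℝ} (h1 : 1 / 2 ≤ τ)
    (h2 : τ ≤ 1) (hx : x ∈ ball c ρ) :
    ∫⁻ y in ball c ρ, f ((1 - τ) • x + τ • y) ≤ 2 ^ n * ∫⁻ y in ball c ρ, f y := by
  have hτ : 0 < τ := by linarith
  calc ∫⁻ y in ball c ρ, f ((1 - τ) • x + τ • y)
      = ∫⁻ y, (ball c ρ).indicator (fun y => f ((1 - τ) • x + τ • y)) y :=
        (lintegral_indicator measurableSet_ball _).symm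
    _ ≤ ∫⁻ y, (fun z => (ball c ρ).indicator f ((1 - τ) • x + z)) (τ • y) := by
        apply lintegral_mono
        intro y
        by_cases hy : y ∈ ball c ρ
        · have hmem : (1 - τ) • x + τ • y ∈ ball c ρ :=
            (convex_ball c ρ) hx hy (by linarith) hτ.le (by ring)
          simp [hy, indicator_of_mem hmem]
        · simp [hy]
    _ = ENNReal.ofReal ((|τ| ^ n)⁻¹) * ∫⁻ z, (ball c ρ).indicator f ((1 - τ) • x + z) :=
        lint_smul hτ.ne' (fun z => (ball c ρ).indicator f ((1 - τ) • x + z))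
    _ = ENNReal.ofReal ((|τ| ^ n)⁻¹) * ∫⁻ y in ball c ρ, f y := by
        rw [lintegral_add_left_eq_self, lintegral_indicator measurableSet_ball]
    _ ≤ _ := by
        gcongr
        have : (|τ| ^ n)⁻¹ ≤ 2 ^ n := by
          rw [abs_of_pos hτ, ← inv_pow]
          apply pow_le_pow_left₀ (by positivity)
          rw [inv_le_comm₀ hτ (by norm_num)]
          linarith
        refine (ENNReal.ofReal_le_ofReal this).trans (le_of_eq ?_)
        rw [ENNReal.ofReal_pow (by norm_num)]
        norm_num

lemma seg_bound2 {n : ℕ} {f : Euc n → ℝ≥0∞} (hf : Measurable f) {c : Euc n} {ρ τ : ℝ}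
    (h1 : 0 ≤ τ) (h2 : τ ≤ 1) :
    ∫⁻ x in ball c ρ, ∫⁻ y in ball c ρ, f ((1 - τ) • x + τ • y) ≤
      2 ^ n * volume (ball c ρ) * ∫⁻ y in ball c ρ, f y := by
  have key : ∀ g : Euc n → ℝ≥0∞, (∀ x ∈ ball c ρ, g x ≤ 2 ^ n * ∫⁻ y in ball c ρ, f y) →
      ∫⁻ x in ball c ρ, g x ≤ 2 ^ n * volume (ball c ρ) * ∫⁻ y in ball c ρ, f y := by
    intro g hg
    refine (setLIntegral_mono' measurableSet_ball hg).trans (le_of_eq ?_)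
    rw [setLIntegral_const]; ring
  rcases le_total (1 / 2) τ with h | h
  · exact key _ fun x hx => seg_bound h h2 hx
  · rw [lintegral_lintegral_swap]
    · apply key
      intro x hx
      have := seg_bound (f := f) (τ := 1 - τ) (by linarith) (by linarith) hx
      simp only [sub_sub_cancel] at this
      refine le_trans (le_of_eq ?_) this
      congr 1; ext y; rw [add_comm]
    · apply Measurable.aemeasurable
      apply hf.comp
      fun_prop

lemma poinc_smooth {n : ℕ} {u : Euc n → ℝ} (hu : ContDiff ℝ (⊤ : ℕ∞) u) (c : Euc n) (ρ : ℝ) :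
    ∫⁻ x in ball c ρ, ∫⁻ y in ball c ρ, ‖u x - u y‖ₑ ^ 2 ≤
      ENNReal.ofReal (2 * ρ) ^ 2 * (2 ^ n * volume (ball c ρ)) *
        ∫⁻ y in ball c ρ, ‖gradient u y‖ₑ ^ 2 := by
  have hdiff : Differentiable ℝ u := hu.differentiable (by simp)
  have hgc := grad_cont hu
  have hp : ∀ x ∈ ball c ρ, ∀ y ∈ ball c ρ, ‖u x - u y‖ₑ ^ 2 ≤
      ENNReal.ofReal (2 * ρ) ^ 2 * ∫⁻ τ in Ioc (0 : ℝ) 1,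
        ‖gradient u ((1 - τ) • y + τ • x)‖ₑ ^ 2 := by
    intro x hx y hy
    have h := ftc_sq (f := fun τ : ℝ => u ((1 - τ) • y + τ • x))
      (f' := fun τ => inner ℝ (gradient u ((1 - τ) • y + τ • x)) (x - y)) ?_ ?_ le_rfl zero_le_one
    · simp only [sub_self, zero_smul, one_smul, zero_add, sub_zero, add_zero] at h
      refine h.trans ?_
      rw [← lintegral_const_mul' _ _ (ENNReal.pow_ne_top ENNReal.ofReal_ne_top)]
      apply lintegral_mono
      intro τ
      simp only
      rw [← mul_pow]
      gcongr
      rw [mul_comm]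
      have h3 : ‖inner ℝ (gradient u ((1 - τ) • y + τ • x)) (x - y)‖ₑ ≤
          ‖gradient u ((1 - τ) • y + τ • x)‖ₑ * ‖x - y‖ₑ := by
        rw [← ofReal_norm, ← ofReal_norm, ← ofReal_norm,
          ← ENNReal.ofReal_mul (norm_nonneg _)]
        exact ENNReal.ofReal_le_ofReal (norm_inner_le_norm _ _)
      refine h3.trans ?_
      gcongr
      rw [← ofReal_norm]
      apply ENNReal.ofReal_le_ofReal
      rw [← dist_eq_norm]
      have := dist_triangle_right x y c
      rw [mem_ball] at hx hy
      linarith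
    · intro τ
      have h1 : HasDerivAt (fun τ : ℝ => (1 - τ) • y + τ • x) (x - y) τ := by
        have : HasDerivAt (fun τ : ℝ => (1 - τ) • y + τ • x) (((-1 : ℝ) • y) + ((1 : ℝ) • x)) τ :=
          (((hasDerivAt_id τ).const_sub 1).smul_const y).add ((hasDerivAt_id τ).smul_const x)
        refine this.congr_deriv ?_
        rw [neg_one_smul, one_smul]; abel
      rw [inner_gradient_left]
      exact (hdiff _).hasFDerivAt.comp_hasDerivAt τ h1
    · fun_prop
  have hm : Measurable (fun p => ‖gradient u p‖ₑ ^ 2) := (hgc.measurable.enorm).pow_const 2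
  calc ∫⁻ x in ball c ρ, ∫⁻ y in ball c ρ, ‖u x - u y‖ₑ ^ 2
      ≤ ∫⁻ x in ball c ρ, ∫⁻ y in ball c ρ, ENNReal.ofReal (2 * ρ) ^ 2 * ∫⁻ τ in Ioc (0 : ℝ) 1,
        ‖gradient u ((1 - τ) • y + τ • x)‖ₑ ^ 2 := by
        apply setLIntegral_mono' measurableSet_ball
        intro x hx
        apply setLIntegral_mono' measurableSet_ball
        intro y hy
        exact hp x hx y hy
    _ = ENNReal.ofReal (2 * ρ) ^ 2 * ∫⁻ x in ball c ρ, ∫⁻ τ in Ioc (0 : ℝ) 1,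
        ∫⁻ y in ball c ρ, ‖gradient u ((1 - τ) • y + τ • x)‖ₑ ^ 2 := by
        rw [← lintegral_const_mul' _ _ (ENNReal.pow_ne_top ENNReal.ofReal_ne_top)]
        congr 1; ext x
        rw [lintegral_const_mul' _ _ (ENNReal.pow_ne_top ENNReal.ofReal_ne_top)]
        congr 1
        rw [lintegral_lintegral_swap]
        apply Measurable.aemeasurable
        apply hm.comp (f := fun p : Euc n × ℝ => (1 - p.2) • p.1 + p.2 • x)
        fun_prop
    _ = ENNReal.ofReal (2 * ρ) ^ 2 * ∫⁻ τ in Ioc (0 : ℝ) 1, ∫⁻ x in ball c ρ, 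
        ∫⁻ y in ball c ρ, ‖gradient u ((1 - τ) • y + τ • x)‖ₑ ^ 2 := by
        rw [lintegral_lintegral_swap]
        apply Measurable.aemeasurable
        apply Measurable.lintegral_prod_right'
          (f := fun q : (Euc n × ℝ) × Euc n => ‖gradient u ((1 - q.1.2) • q.2 + q.1.2 • q.1.1)‖ₑ ^ 2)
        apply hm.comp (f := fun q : (Euc n × ℝ) × Euc n => (1 - q.1.2) • q.2 + q.1.2 • q.1.1)
        fun_prop
    _ ≤ ENNReal.ofReal (2 * ρ) ^ 2 * ∫⁻ τ in Ioc (0 : ℝ) 1, 2 ^ n * volume (ball c ρ) *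
        ∫⁻ y in ball c ρ, ‖gradient u y‖ₑ ^ 2 := by
        gcongr 1
        apply setLIntegral_mono' measurableSet_Ioc
        intro τ hτ
        have := seg_bound2 hm (c := c) (ρ := ρ) (τ := 1 - τ) (by linarith [hτ.2]) (by linarith [hτ.1])
        simp only [sub_sub_cancel] at this
        refine le_trans (le_of_eq ?_) this
        congr 1; ext x; congr 1; ext y; rw [add_comm]
    _ = _ := by
        rw [setLIntegral_const]; simp [mul_assoc]

/-- the kernel `|z|^{-p}` -/
def kap {n : ℕ} (p : ℝ) (z : Euc n) : ℝ≥0∞ := ENNReal.ofReal (‖z‖ ^ (-p))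

lemma kap_meas {n : ℕ} (p : ℝ) : Measurable (kap p : Euc n → ℝ≥0∞) := by
  unfold kap
  fun_prop

lemma kap_smul {n : ℕ} {r : ℝ} (hr : 0 < r) (p : ℝ) (z : Euc n) :
    kap p (r • z) = ENNReal.ofReal (r ^ (-p)) * kap p z := by
  unfold kap
  rw [← ENNReal.ofReal_mul (by positivity), norm_smul, Real.norm_eq_abs, abs_of_pos hr,
    Real.mul_rpow hr.le (norm_nonneg _)]

lemma kap_le {n : ℕ} {a p : ℝ} (ha : 0 < a) (hp : 0 ≤ p) {z : Euc n} (hz : a ≤ ‖z‖) :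
    kap p z ≤ ENNReal.ofReal (a ^ (-p)) :=
  ENNReal.ofReal_le_ofReal (Real.rpow_le_rpow_of_nonpos ha hz (by linarith))

lemma kap_ge {n : ℕ} {a p : ℝ} (hp : 0 ≤ p) {z : Euc n} (h0 : z ≠ 0) (hz : ‖z‖ ≤ a) :
    ENNReal.ofReal (a ^ (-p)) ≤ kap p z :=
  ENNReal.ofReal_le_ofReal (Real.rpow_le_rpow_of_nonpos (norm_pos_iff.2 h0) hz (by linarith))

lemma kap_sq {n : ℕ} (p : ℝ) {z : Euc n} (h0 : z ≠ 0) : ‖z‖ₑ ^ 2 * kap (p + 2) z = kap p z := by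
  unfold kap
  rw [← ofReal_norm, ← ENNReal.ofReal_pow (norm_nonneg _), ← ENNReal.ofReal_mul (by positivity)]
  congr 1
  rw [← Real.rpow_natCast, ← Real.rpow_add (norm_pos_iff.2 h0)]
  congr 1; push_cast; ring

lemma sob_pass {n : ℕ} {u : Euc n → ℝ} {V : Euc n → Euc n} (hu : LocallyIntegrable u volume)
    (hV : L2loc V) (hW : WG univ u V) {P : Type*} [MeasurableSpace P] (μ : Measure P)
    (a b : P → Euc n) (ha : Measure.QuasiMeasurePreserving a μ volume)
    (hb : Measure.QuasiMeasurePreserving b μ volume) (k : P → ℝ≥0∞) (hk : Measurable k)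
    (hkt : ∀ p, k p ≠ ⊤)
    (K : Euc n → ℝ≥0∞) (hK : Measurable K) (M : ℝ≥0∞) (hM : M ≠ ⊤) (R : ℝ)
    (hKM : ∀ x, K x ≤ (ball 0 R).indicator (fun _ => M) x) (C : ℝ≥0∞) (hC : C ≠ ⊤)
    (h : ∀ f : Euc n → ℝ, ContDiff ℝ (⊤ : ℕ∞) f →
      ∫⁻ p, ‖f (a p) - f (b p)‖ₑ ^ 2 * k p ∂μ ≤ C * ∫⁻ x, K x * ‖gradient f x‖ₑ ^ 2) :
    ∫⁻ p, ‖u (a p) - u (b p)‖ₑ ^ 2 * k p ∂μ ≤ C * (2 * ∫⁻ x, K x * ‖V x‖ₑ ^ 2) := by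
  have hgrad : ∀ j x, gradient (moll j u) x = moll j V x := fun j x =>
    (moll_grad j hu hW (subset_univ _)).gradient
  have hVm : ∀ j, Continuous (moll j V) := fun j => by
    have := grad_cont (moll_contDiff j hu)
    rwa [show gradient (moll j u) = moll j V from funext (hgrad j)] at this
  have hae := moll_ae hu
  have hlim : ∀ᵐ p ∂μ, Tendsto (fun j => ‖moll j u (a p) - moll j u (b p)‖ₑ ^ 2 * k p) atTop
      (𝓝 (‖u (a p) - u (b p)‖ₑ ^ 2 * k p)) := by
    filter_upwards [ha.ae hae, hb.ae hae] with p h1 h2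
    have h3 : Tendsto (fun j => ‖moll j u (a p) - moll j u (b p)‖ₑ ^ 2) atTop
      (𝓝 (‖u (a p) - u (b p)‖ₑ ^ 2)) :=
      (ENNReal.continuous_pow 2).continuousAt.tendsto.comp (h1.sub h2).enorm
    exact ENNReal.Tendsto.mul_const h3 (Or.inr (hkt p))
  have hF : ∫⁻ p, ‖u (a p) - u (b p)‖ₑ ^ 2 * k p ∂μ ≤
      liminf (fun j => ∫⁻ p, ‖moll j u (a p) - moll j u (b p)‖ₑ ^ 2 * k p ∂μ) atTop := by
    refine le_trans (lintegral_mono_ae ?_) (lintegral_liminf_le (fun j => ?_))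
    · filter_upwards [hlim] with p hp
      rw [hp.liminf_eq]
    · have hc := (moll_contDiff j hu).continuous.measurable
      have h1 := hc.comp ha.measurable
      have h2 := hc.comp hb.measurable
      exact ((h1.sub h2).enorm.pow_const 2).mul hk
  refine hF.trans ?_
  set e : ℕ → ℝ≥0∞ := fun j => ∫⁻ x in ball 0 R, ‖moll j V x - V x‖ₑ ^ 2 with he
  have he0 : Tendsto e atTop (𝓝 0) := moll_L2loc hV R
  have hb : ∀ j, ∫⁻ p, ‖moll j u (a p) - moll j u (b p)‖ₑ ^ 2 * k p ∂μ ≤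
      C * (2 * (∫⁻ x, K x * ‖V x‖ₑ ^ 2) + 2 * M * e j) := by
    intro j
    refine (h _ (moll_contDiff j hu)).trans ?_
    gcongr
    simp only [hgrad]
    calc ∫⁻ x, K x * ‖moll j V x‖ₑ ^ 2
        ≤ ∫⁻ x, (2 * (K x * ‖V x‖ₑ ^ 2) + (ball 0 R).indicator
            (fun x => 2 * M * ‖moll j V x - V x‖ₑ ^ 2) x) := by
          apply lintegral_mono
          intro x
          have h1 : ‖moll j V x‖ₑ ^ 2 ≤ 2 * ‖V x‖ₑ ^ 2 + 2 * ‖moll j V x - V x‖ₑ ^ 2 := by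
            refine le_trans ?_ (ennreal_add_sq _ _)
            gcongr
            have := enorm_add_le (V x) (moll j V x - V x)
            rwa [add_sub_cancel] at this
          refine (mul_le_mul_right h1 (K x)).trans ?_
          rw [mul_add]
          refine add_le_add ?_ ?_
          · exact le_of_eq (by ring)
          · have := hKM x
            by_cases hx : x ∈ ball (0 : Euc n) R
            · simp only [hx, indicator_of_mem] at this ⊢
              calc K x * (2 * ‖moll j V x - V x‖ₑ ^ 2) ≤ M * (2 * ‖moll j V x - V x‖ₑ ^ 2) := by gcongr
                _ = _ := by ring
            · simp only [hx, not_false_eq_true, indicator_of_notMem] at this ⊢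
              simp [le_zero_iff.1 this]
      _ = _ := by
          rw [lintegral_add_left', lintegral_const_mul' _ _ (by simp), lintegral_indicator measurableSet_ball,
            lintegral_const_mul' _ _ (ENNReal.mul_ne_top (by simp) hM)]
          exact ((hK.aemeasurable.mul (hV.1.enorm.pow_const 2))).const_mul _
  have hlimb : Tendsto (fun j => C * (2 * (∫⁻ x, K x * ‖V x‖ₑ ^ 2) + 2 * M * e j)) atTop
      (𝓝 (C * (2 * (∫⁻ x, K x * ‖V x‖ₑ ^ 2) + 2 * M * 0))) := by
    apply ENNReal.Tendsto.const_mul _ (Or.inr hC)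
    apply Tendsto.const_add
    exact ENNReal.Tendsto.const_mul he0 (Or.inr (ENNReal.mul_ne_top (by simp) hM))
  have := (liminf_le_liminf (Eventually.of_forall hb)).trans (le_of_eq hlimb.liminf_eq)
  simpa using this

lemma poinc {n : ℕ} {u : Euc n → ℝ} {V : Euc n → Euc n} (hu : LocallyIntegrable u volume)
    (hV : L2loc V) (hW : WG univ u V) (c : Euc n) (ρ : ℝ) :
    ∫⁻ x in ball c ρ, ∫⁻ y in ball c ρ, ‖u x - u y‖ₑ ^ 2 ≤
      ENNReal.ofReal (2 * ρ) ^ 2 * (2 ^ n * volume (ball c ρ)) *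
        (2 * ∫⁻ y in ball c ρ, ‖V y‖ₑ ^ 2) := by
  have q1 : Measure.QuasiMeasurePreserving (Prod.fst : Euc n × Euc n → Euc n)
      ((volume.restrict (ball c ρ)).prod (volume.restrict (ball c ρ))) volume :=
    Measure.quasiMeasurePreserving_fst.mono_right Measure.absolutelyContinuous_restrict
  have q2 : Measure.QuasiMeasurePreserving (Prod.snd : Euc n × Euc n → Euc n)
      ((volume.restrict (ball c ρ)).prod (volume.restrict (ball c ρ))) volume :=
    Measure.quasiMeasurePreserving_snd.mono_right Measure.absolutelyContinuous_restrict
  have := sob_pass hu hV hW _ Prod.fst Prod.snd q1 q2 (fun _ => 1) measurable_const (by simp)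
    ((ball c ρ).indicator (fun _ => 1)) (measurable_const.indicator measurableSet_ball) 1 (by simp)
    (‖c‖ + ρ) ?_ (ENNReal.ofReal (2 * ρ) ^ 2 * (2 ^ n * volume (ball c ρ))) ?_ ?_
  · simp only [mul_one] at this
    have hs : ∀ g : Euc n → Euc n, ∫⁻ x, (ball c ρ).indicator (fun _ => 1) x * ‖g x‖ₑ ^ 2
        = ∫⁻ x in ball c ρ, ‖g x‖ₑ ^ 2 := by
      intro g
      rw [← lintegral_indicator measurableSet_ball]
      congr 1; ext x
      by_cases hx : x ∈ ball c ρ <;> simp [hx]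
    rw [hs] at this
    refine le_trans (le_of_eq ?_) this
    rw [lintegral_prod (fun p : Euc n × Euc n => ‖u p.1 - u p.2‖ₑ ^ 2)]
    have h1 := hu.aestronglyMeasurable.comp_quasiMeasurePreserving q1
    have h2 := hu.aestronglyMeasurable.comp_quasiMeasurePreserving q2
    exact (h1.sub h2).enorm.pow_const 2
  · intro x
    by_cases hx : x ∈ ball c ρ
    · have : x ∈ ball (0 : Euc n) (‖c‖ + ρ) := by
        rw [mem_ball, dist_zero_right]
        rw [mem_ball, dist_eq_norm] at hx
        have := norm_add_le c (x - c)
        rw [add_sub_cancel] at this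
        linarith
      simp [hx, this]
    · simp [hx]
  · exact ENNReal.mul_ne_top (ENNReal.pow_ne_top ENNReal.ofReal_ne_top)
      (ENNReal.mul_ne_top (by simp) measure_ball_lt_top.ne)
  · intro f hf
    simp only [mul_one]
    rw [lintegral_prod (fun p : Euc n × Euc n => ‖f p.1 - f p.2‖ₑ ^ 2)]
    · refine (poinc_smooth hf c ρ).trans (le_of_eq ?_)
      congr 1
      rw [← lintegral_indicator measurableSet_ball]
      congr 1; ext x
      by_cases hx : x ∈ ball c ρ <;> simp [hx]
    · apply Measurable.aemeasurable
      have := hf.continuous.measurable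
      fun_prop

lemma dil_smooth {n : ℕ} {f : Euc n → ℝ} (hf : ContDiff ℝ (⊤ : ℕ∞) f) (c : Euc n) {s a b : ℝ}
    (hs : 0 < s) (hs1 : s ≤ 1) (ha : 0 < a) :
    ∫⁻ z, ‖f (c + z) - f (c + s ^ 2 • z)‖ₑ ^ 2 *
        {z : Euc n | a < ‖z‖ ∧ ‖z‖ < b}.indicator (kap ((n : ℝ) - 1 + 2)) z ≤
      4 * ∫⁻ w, {z : Euc n | s ^ 2 * a < ‖z‖ ∧ ‖z‖ < b}.indicator (kap ((n : ℝ) - 1)) w *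
        ‖gradient f (c + w)‖ₑ ^ 2 := by
  have hdiff : Differentiable ℝ f := hf.differentiable (by simp)
  have hgc := grad_cont hf
  set S' : Set (Euc n) := {z : Euc n | s ^ 2 * a < ‖z‖ ∧ ‖z‖ < b} with hS'
  have hS'm : MeasurableSet S' :=
    (measurableSet_lt measurable_const measurable_norm).inter
      (measurableSet_lt measurable_norm measurable_const)
  set G : Euc n → ℝ≥0∞ := fun w => S'.indicator (kap ((n : ℝ) - 1)) w * ‖gradient f (c + w)‖ₑ ^ 2 with hG
  have hGm : Measurable G :=
    ((kap_meas _).indicator hS'm).mul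
      (((hgc.comp (continuous_const.add continuous_id)).measurable.enorm).pow_const 2)
  have hp : ∀ z : Euc n, ‖f (c + z) - f (c + s ^ 2 • z)‖ₑ ^ 2 *
        {z : Euc n | a < ‖z‖ ∧ ‖z‖ < b}.indicator (kap ((n : ℝ) - 1 + 2)) z ≤
      ∫⁻ σ in Ioc s 1, 4 * (ENNReal.ofReal (σ ^ (2 * n)) * G (σ ^ 2 • z)) := by
    intro z
    by_cases hz : a < ‖z‖ ∧ ‖z‖ < b
    swap
    · rw [indicator_of_notMem (s := {z : Euc n | a < ‖z‖ ∧ ‖z‖ < b}) hz]; simp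
    rw [indicator_of_mem (s := {z : Euc n | a < ‖z‖ ∧ ‖z‖ < b}) hz]
    have hz0 : z ≠ 0 := norm_pos_iff.1 (ha.trans hz.1)
    have h := ftc_sq (f := fun σ : ℝ => f (c + σ ^ 2 • z))
      (f' := fun σ => inner ℝ (gradient f (c + σ ^ 2 • z)) ((2 * σ) • z)) ?_ ?_ hs.le hs1
    · simp only [one_pow, one_smul] at h
      refine (mul_le_mul_left h _).trans ?_
      rw [← lintegral_mul_const' _ _ (by simp [kap])]
      apply setLIntegral_mono' measurableSet_Ioc
      intro σ hσ
      have hσ0 : 0 < σ := hs.trans hσ.1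
      have h3 : ‖inner ℝ (gradient f (c + σ ^ 2 • z)) ((2 * σ) • z)‖ₑ ≤
          ‖gradient f (c + σ ^ 2 • z)‖ₑ * (ENNReal.ofReal (2 * σ) * ‖z‖ₑ) := by
        rw [← ofReal_norm, ← ofReal_norm, ← ofReal_norm, ← ENNReal.ofReal_mul (by positivity),
          ← ENNReal.ofReal_mul (norm_nonneg _)]
        refine ENNReal.ofReal_le_ofReal ((norm_inner_le_norm _ _).trans ?_)
        rw [norm_smul, Real.norm_eq_abs, abs_of_pos (by positivity : 0 < 2 * σ)]
      have hmem : σ ^ 2 • z ∈ S' := by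
        have hn : ‖σ ^ 2 • z‖ = σ ^ 2 * ‖z‖ := by
          rw [norm_smul, Real.norm_eq_abs, abs_of_pos (by positivity : 0 < σ ^ 2)]
        have e1 : s ^ 2 ≤ σ ^ 2 := pow_le_pow_left₀ hs.le hσ.1.le 2
        have e2 : σ ^ 2 ≤ 1 := pow_le_one₀ hσ0.le hσ.2
        constructor
        · rw [hn]; nlinarith [hz.1, pow_pos hs 2]
        · rw [hn]; nlinarith [hz.1, hz.2, norm_nonneg z]
      simp only [hG]
      rw [indicator_of_mem hmem, kap_smul (by positivity)]
      calc _ ≤ (‖gradient f (c + σ ^ 2 • z)‖ₑ * (ENNReal.ofReal (2 * σ) * ‖z‖ₑ)) ^ 2 *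
            kap ((n : ℝ) - 1 + 2) z := by gcongr
        _ = ENNReal.ofReal (2 * σ) ^ 2 * ((‖z‖ₑ ^ 2 * kap ((n : ℝ) - 1 + 2) z) *
            ‖gradient f (c + σ ^ 2 • z)‖ₑ ^ 2) := by ring
        _ = ENNReal.ofReal (2 * σ) ^ 2 * (kap ((n : ℝ) - 1) z *
            ‖gradient f (c + σ ^ 2 • z)‖ₑ ^ 2) := by rw [kap_sq _ hz0]
        _ = (4 * (ENNReal.ofReal (σ ^ (2 * n)) * ENNReal.ofReal ((σ ^ 2) ^ (-((n : ℝ) - 1))))) *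
            (kap ((n : ℝ) - 1) z * ‖gradient f (c + σ ^ 2 • z)‖ₑ ^ 2) := by
            congr 1
            rw [← ENNReal.ofReal_pow (by positivity), ← ENNReal.ofReal_mul (by positivity),
              show (4 : ℝ≥0∞) = ENNReal.ofReal 4 by norm_num, ← ENNReal.ofReal_mul (by norm_num)]
            congr 1
            have : σ ^ (2 * n) = (σ ^ 2) ^ (n : ℝ) := by rw [Real.rpow_natCast, ← pow_mul]
            rw [this, ← Real.rpow_add (by positivity),
              show (n : ℝ) + -((n : ℝ) - 1) = 1 by ring, Real.rpow_one]
            ring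
        _ = _ := by ring
    · intro σ
      have h1 : HasDerivAt (fun σ : ℝ => c + σ ^ 2 • z) ((2 * σ) • z) σ := by
        have : HasDerivAt (fun σ : ℝ => c + σ ^ 2 • z) (((2 : ℕ) * σ ^ 1) • z) σ :=
          ((hasDerivAt_pow 2 σ).smul_const z).const_add c
        refine this.congr_deriv ?_
        simp
      rw [inner_gradient_left]
      exact (hdiff _).hasFDerivAt.comp_hasDerivAt σ h1
    · fun_prop
  calc _ ≤ ∫⁻ z, ∫⁻ σ in Ioc s 1, 4 * (ENNReal.ofReal (σ ^ (2 * n)) * G (σ ^ 2 • z)) :=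
        lintegral_mono hp
    _ = ∫⁻ σ in Ioc s 1, ∫⁻ z, 4 * (ENNReal.ofReal (σ ^ (2 * n)) * G (σ ^ 2 • z)) := by
        rw [lintegral_lintegral_swap]
        apply Measurable.aemeasurable
        apply Measurable.const_mul
        apply Measurable.mul
        · fun_prop
        · apply hGm.comp (f := fun p : Euc n × ℝ => p.2 ^ 2 • p.1)
          fun_prop
    _ = ∫⁻ σ in Ioc s 1, 4 * ∫⁻ z, G z := by
        apply setLIntegral_congr_fun measurableSet_Ioc
        intro σ hσ
        have hσ0 : 0 < σ := hs.trans hσ.1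
        simp only
        rw [lintegral_const_mul' _ _ (by simp), lintegral_const_mul' _ _ (by simp),
          lint_smul (by positivity : σ ^ 2 ≠ 0), ← mul_assoc (ENNReal.ofReal _),
          ← ENNReal.ofReal_mul (by positivity), abs_of_pos (by positivity : 0 < σ ^ 2), ← pow_mul,
          mul_inv_cancel₀ (by positivity)]
        simp
    _ ≤ _ := by
        rw [setLIntegral_const]
        simp only [Real.volume_Ioc]
        calc _ ≤ (4 * ∫⁻ z, G z) * 1 := by
              gcongr
              rw [← ENNReal.ofReal_one]
              exact ENNReal.ofReal_le_ofReal (by linarith)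
          _ = _ := mul_one _

/-- energy potential -/
def EE {n : ℕ} (V : Euc n → Euc n) (c : Euc n) : ℝ≥0∞ :=
  ∫⁻ x, kap ((n : ℝ) - 1) (x - c) * ‖V x‖ₑ ^ 2

lemma qmp_smul {n : ℕ} {r : ℝ} (hr : r ≠ 0) (c : Euc n) :
    Measure.QuasiMeasurePreserving (fun z : Euc n => c + r • z) volume volume := by
  have h1 : Measure.QuasiMeasurePreserving (fun z : Euc n => r • z) volume volume := by
    refine ⟨measurable_const_smul r, ?_⟩
    rw [Measure.map_addHaar_smul _ hr]
    exact Measure.smul_absolutelyContinuous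
  exact (measurePreserving_add_left volume c).quasiMeasurePreserving.comp h1

lemma dil {n : ℕ} (hn : 1 ≤ n) {u : Euc n → ℝ} {V : Euc n → Euc n} (hu : LocallyIntegrable u volume)
    (hV : L2loc V) (hW : WG univ u V) (c : Euc n) {s a b : ℝ}
    (hs : 0 < s) (hs1 : s ≤ 1) (ha : 0 < a) :
    ∫⁻ z, ‖u (c + z) - u (c + s ^ 2 • z)‖ₑ ^ 2 *
        {z : Euc n | a < ‖z‖ ∧ ‖z‖ < b}.indicator (kap ((n : ℝ) - 1 + 2)) z ≤ 8 * EE V c := by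
  have hn' : (1 : ℝ) ≤ n := by exact_mod_cast hn
  have hSm : ∀ a b : ℝ, MeasurableSet {z : Euc n | a < ‖z‖ ∧ ‖z‖ < b} := fun a b =>
    (measurableSet_lt measurable_const measurable_norm).inter
      (measurableSet_lt measurable_norm measurable_const)
  have q1 : Measure.QuasiMeasurePreserving (fun z : Euc n => c + z) volume volume :=
    (measurePreserving_add_left volume c).quasiMeasurePreserving
  have hKm : Measurable ({z : Euc n | s ^ 2 * a < ‖z‖ ∧ ‖z‖ < b}.indicator (kap ((n : ℝ) - 1))) :=
    (kap_meas _).indicator (hSm _ _)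
  have := sob_pass hu hV hW volume (fun z => c + z) (fun z => c + s ^ 2 • z) q1
    (qmp_smul (by positivity) c)
    ({z : Euc n | a < ‖z‖ ∧ ‖z‖ < b}.indicator (kap ((n : ℝ) - 1 + 2)))
    ((kap_meas _).indicator (hSm _ _)) ?_
    (fun x => {z : Euc n | s ^ 2 * a < ‖z‖ ∧ ‖z‖ < b}.indicator (kap ((n : ℝ) - 1)) (x - c))
    (hKm.comp (measurable_sub_const c))
    (ENNReal.ofReal ((s ^ 2 * a) ^ (-((n : ℝ) - 1)))) ENNReal.ofReal_ne_top (‖c‖ + b) ?_ 4 (by simp) ?_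
  · refine this.trans ?_
    rw [← mul_assoc, show (4 : ℝ≥0∞) * 2 = 8 by norm_num]
    unfold EE
    gcongr
    exact indicator_le_self _ _ _
  · intro z
    by_cases hz : z ∈ {z : Euc n | a < ‖z‖ ∧ ‖z‖ < b}
    · rw [indicator_of_mem hz]; exact ENNReal.ofReal_ne_top
    · rw [indicator_of_notMem hz]; simp
  · intro x
    by_cases hx : x - c ∈ {z : Euc n | s ^ 2 * a < ‖z‖ ∧ ‖z‖ < b}
    · have hb : x ∈ ball (0 : Euc n) (‖c‖ + b) := by
        rw [mem_ball, dist_zero_right]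
        have := norm_add_le c (x - c)
        rw [add_sub_cancel] at this
        linarith [hx.2]
      rw [indicator_of_mem hx, indicator_of_mem hb]
      exact kap_le (by positivity) (by linarith) hx.1.le
    · rw [indicator_of_notMem hx]; simp
  · intro f hf
    refine (dil_smooth hf c hs hs1 ha).trans (le_of_eq ?_)
    congr 1
    rw [← lintegral_sub_right_eq_self _ c]
    simp

lemma osc_bound {n : ℕ} (hn : 1 ≤ n) {u : Euc n → ℝ} {V : Euc n → Euc n}
    (hu : LocallyIntegrable u volume)
    (hV : L2loc V) (hW : WG univ u V) (c : Euc n) {ρ : ℝ} (hρ : 0 < ρ) :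
    ∫⁻ x in ball c ρ, ‖u x - ⨍ y in ball c ρ, u y‖ₑ ^ 2 ≤
      ENNReal.ofReal (8 * 2 ^ n * ρ ^ 2 * ρ ^ ((n : ℝ) - 1)) * EE V c := by
  have hn' : (1 : ℝ) ≤ n := by exact_mod_cast hn
  set B := ball c ρ with hB
  have hB0 : volume B ≠ 0 := (measure_ball_pos volume c hρ).ne'
  have hBt : volume B ≠ ⊤ := measure_ball_lt_top.ne
  have hint : IntegrableOn u B := by
    apply (hu.integrableOn_isCompact (isCompact_closedBall c ρ)).mono_set ball_subset_closedBall
  have h1 : ∀ x, ‖u x - ⨍ y in B, u y‖ₑ ^ 2 ≤ (volume B)⁻¹ * ∫⁻ y in B, ‖u x - u y‖ₑ ^ 2 := by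
    intro x
    have : IsFiniteMeasure (volume.restrict B) := ⟨by simpa using hBt.lt_top⟩
    have hr : 0 < volume.real B := ENNReal.toReal_pos hB0 hBt
    have e1 : u x - ⨍ y in B, u y = (volume.real B)⁻¹ * ∫ y in B, (u x - u y) := by
      rw [integral_sub (integrable_const _) hint, setAverage_eq]
      simp
      field_simp
    have e2 : ‖(volume.real B)⁻¹‖ₑ = (volume B)⁻¹ := by
      rw [Real.enorm_eq_ofReal (by positivity), ENNReal.ofReal_inv_of_pos hr, Measure.real,
        ENNReal.ofReal_toReal hBt]
    rw [e1, enorm_mul, e2, mul_pow]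
    have h2 : ‖∫ y in B, (u x - u y)‖ₑ ≤ ∫⁻ y in B, 1 * ‖u x - u y‖ₑ := by
      simpa using enorm_integral_le_lintegral_enorm _
    have h3 := (pow_le_pow_left' h2 2).trans (cs_lint aemeasurable_const
      ((aestronglyMeasurable_const.sub hint.aestronglyMeasurable).enorm))
    calc _ ≤ (volume B)⁻¹ ^ 2 * ((∫⁻ y in B, 1 ^ 2) * ∫⁻ y in B, ‖u x - u y‖ₑ ^ 2) := by gcongr
      _ = ((volume B)⁻¹ * volume B) * (volume B)⁻¹ * ∫⁻ y in B, ‖u x - u y‖ₑ ^ 2 := by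
        simp; ring
      _ = _ := by rw [ENNReal.inv_mul_cancel hB0 hBt, one_mul]
  have h4 : ∫⁻ y in B, ‖V y‖ₑ ^ 2 ≤ ENNReal.ofReal (ρ ^ ((n : ℝ) - 1)) * EE V c := by
    unfold EE
    rw [← lintegral_const_mul' _ _ ENNReal.ofReal_ne_top]
    refine le_trans ?_ (setLIntegral_le_lintegral B _)
    have hc : ∀ᵐ x ∂(volume.restrict B), x ≠ c := by
      have : Nonempty (Fin n) := ⟨⟨0, hn⟩⟩
      exact ae_restrict_of_ae (by simp [ae_iff])
    apply lintegral_mono_ae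
    filter_upwards [hc, ae_restrict_mem measurableSet_ball] with x hx hxB
    rw [← mul_assoc]
    have h5 := kap_ge (a := ρ) (p := (n : ℝ) - 1) (by linarith) (sub_ne_zero.2 hx)
      (by rw [← dist_eq_norm]; exact (mem_ball.1 hxB).le)
    calc ‖V x‖ₑ ^ 2 = ENNReal.ofReal (ρ ^ ((n : ℝ) - 1)) * ENNReal.ofReal (ρ ^ (-((n : ℝ) - 1))) *
          ‖V x‖ₑ ^ 2 := by
          rw [← ENNReal.ofReal_mul (by positivity), ← Real.rpow_add hρ]
          simp
      _ ≤ _ := by gcongr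
  calc _ ≤ ∫⁻ x in B, (volume B)⁻¹ * ∫⁻ y in B, ‖u x - u y‖ₑ ^ 2 := lintegral_mono h1
    _ = (volume B)⁻¹ * ∫⁻ x in B, ∫⁻ y in B, ‖u x - u y‖ₑ ^ 2 :=
        lintegral_const_mul' _ _ (ENNReal.inv_ne_top.2 hB0)
    _ ≤ (volume B)⁻¹ * (ENNReal.ofReal (2 * ρ) ^ 2 * (2 ^ n * volume B) *
        (2 * ∫⁻ y in B, ‖V y‖ₑ ^ 2)) := by gcongr; exact poinc hu hV hW c ρ
    _ = ((volume B)⁻¹ * volume B) * (ENNReal.ofReal (2 * ρ) ^ 2 * 2 ^ n * 2) *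
        ∫⁻ y in B, ‖V y‖ₑ ^ 2 := by ring
    _ ≤ 1 * ENNReal.ofReal (8 * 2 ^ n * ρ ^ 2) *
        (ENNReal.ofReal (ρ ^ ((n : ℝ) - 1)) * EE V c) := by
        rw [ENNReal.inv_mul_cancel hB0 hBt]
        gcongr
        rw [← ENNReal.ofReal_pow (by positivity), show (2 : ℝ≥0∞) = ENNReal.ofReal 2 by norm_num,
          ← ENNReal.ofReal_pow (by positivity), ← ENNReal.ofReal_mul (by positivity),
          ← ENNReal.ofReal_mul (by positivity)]
        apply ENNReal.ofReal_le_ofReal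
        nlinarith
    _ = _ := by
        rw [one_mul, ← mul_assoc, ← ENNReal.ofReal_mul (by positivity)]

lemma osc_tendsto {n : ℕ} (hn : 1 ≤ n) {u : Euc n → ℝ} {V : Euc n → Euc n}
    (hu : LocallyIntegrable u volume)
    (hV : L2loc V) (hW : WG univ u V) (c : Euc n) (hE : EE V c ≠ ⊤) {t : ℝ} (ht : HasTraceAt u c t) :
    Tendsto (fun ρ : ℝ => ENNReal.ofReal (ρ ^ (-(n : ℝ))) * ∫⁻ x in ball c ρ, ‖u x - t‖ₑ ^ 2)
      (𝓝[>] 0) (𝓝 0) := by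
  set ω := volume (ball (0 : Euc n) 1) with hω
  have hωt : ω ≠ ⊤ := measure_ball_lt_top.ne
  have hb : ∀ᶠ ρ : ℝ in 𝓝[>] 0,
      ENNReal.ofReal (ρ ^ (-(n : ℝ))) * ∫⁻ x in ball c ρ, ‖u x - t‖ₑ ^ 2 ≤
      2 * (ENNReal.ofReal (8 * 2 ^ n * ρ) * EE V c) +
        2 * (ω * ‖(⨍ y in ball c ρ, u y) - t‖ₑ ^ 2) := by
    filter_upwards [self_mem_nhdsWithin] with ρ hρ
    have hρ : 0 < ρ := hρ
    have h1 : ∫⁻ x in ball c ρ, ‖u x - t‖ₑ ^ 2 ≤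
        2 * (∫⁻ x in ball c ρ, ‖u x - ⨍ y in ball c ρ, u y‖ₑ ^ 2) +
        2 * (‖(⨍ y in ball c ρ, u y) - t‖ₑ ^ 2 * volume (ball c ρ)) := by
      calc ∫⁻ x in ball c ρ, ‖u x - t‖ₑ ^ 2 ≤ ∫⁻ x in ball c ρ,
          (2 * ‖u x - ⨍ y in ball c ρ, u y‖ₑ ^ 2 + 2 * ‖(⨍ y in ball c ρ, u y) - t‖ₑ ^ 2) := by
            apply lintegral_mono
            intro x
            beta_reduce
            refine le_trans ?_ (ennreal_add_sq _ _)
            gcongr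
            refine le_trans (le_of_eq ?_) (enorm_add_le _ _)
            rw [sub_add_sub_cancel]
        _ = _ := by
            rw [lintegral_add_right _ measurable_const, lintegral_const_mul' _ _ (by simp), setLIntegral_const]
            ring
    have h2 := osc_bound hn hu hV hW c hρ
    have h3 : volume (ball c ρ) = ENNReal.ofReal (ρ ^ (n : ℝ)) * ω := by
      rw [Measure.addHaar_ball_of_pos _ _ hρ]
      simp [hω]
    have hcancel : ENNReal.ofReal (ρ ^ (-(n : ℝ))) * ENNReal.ofReal (ρ ^ (n : ℝ)) = 1 := by
      rw [← ENNReal.ofReal_mul (by positivity), ← Real.rpow_add hρ]; simp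
    have hc2 : ENNReal.ofReal (ρ ^ (-(n : ℝ))) *
        ENNReal.ofReal (8 * 2 ^ n * ρ ^ 2 * ρ ^ ((n : ℝ) - 1)) = ENNReal.ofReal (8 * 2 ^ n * ρ) := by
      rw [← ENNReal.ofReal_mul (by positivity)]
      congr 1
      have : ρ ^ (-(n : ℝ)) * (ρ ^ 2 * ρ ^ ((n : ℝ) - 1)) = ρ := by
        rw [← Real.rpow_natCast, ← Real.rpow_add hρ, ← Real.rpow_add hρ]
        conv_rhs => rw [← Real.rpow_one ρ]
        congr 1; push_cast; ring
      linear_combination (8 * 2 ^ n) * this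
    calc _ ≤ ENNReal.ofReal (ρ ^ (-(n : ℝ))) * (2 *
          (ENNReal.ofReal (8 * 2 ^ n * ρ ^ 2 * ρ ^ ((n : ℝ) - 1)) * EE V c) +
        2 * (‖(⨍ y in ball c ρ, u y) - t‖ₑ ^ 2 * volume (ball c ρ))) := by
          gcongr; refine h1.trans ?_; gcongr
      _ = 2 * ((ENNReal.ofReal (ρ ^ (-(n : ℝ))) *
        ENNReal.ofReal (8 * 2 ^ n * ρ ^ 2 * ρ ^ ((n : ℝ) - 1))) * EE V c) +
        2 * ((ENNReal.ofReal (ρ ^ (-(n : ℝ))) * ENNReal.ofReal (ρ ^ (n : ℝ))) *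
          (ω * ‖(⨍ y in ball c ρ, u y) - t‖ₑ ^ 2)) := by rw [h3]; ring
      _ = _ := by rw [hcancel, hc2, one_mul]
  refine tendsto_of_tendsto_of_tendsto_of_le_of_le' tendsto_const_nhds ?_
    (Eventually.of_forall fun _ => zero_le) hb
  have l1 : Tendsto (fun ρ : ℝ => ENNReal.ofReal (8 * 2 ^ n * ρ)) (𝓝[>] 0) (𝓝 (ENNReal.ofReal (8 * 2 ^ n * 0))) := by
    apply ENNReal.tendsto_ofReal
    exact ((continuous_const.mul continuous_id).tendsto 0).mono_left nhdsWithin_le_nhds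
  have l2 : Tendsto (fun ρ : ℝ => ‖(⨍ y in ball c ρ, u y) - t‖ₑ ^ 2) (𝓝[>] 0) (𝓝 (‖t - t‖ₑ ^ 2)) :=
    (ENNReal.continuous_pow 2).continuousAt.tendsto.comp
      ((Tendsto.sub_const ht t).enorm)
  have l3 := (ENNReal.Tendsto.const_mul (a := 2) (ENNReal.Tendsto.mul_const l1 (Or.inr hE)) (Or.inr (by simp))).add
    (ENNReal.Tendsto.const_mul (a := 2) (ENNReal.Tendsto.const_mul (a := ω) l2 (Or.inr hωt)) (Or.inr (by simp)))
  simpa using l3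

lemma point_hardy {n : ℕ} (hn : 1 ≤ n) {u : Euc n → ℝ} {V : Euc n → Euc n}
    (hu : LocallyIntegrable u volume)
    (hV : L2loc V) (hW : WG univ u V) (c : Euc n) {t : ℝ} (ht : HasTraceAt u c t) :
    ∫⁻ x, ‖u x - t‖ₑ ^ 2 * kap ((n : ℝ) + 1) (x - c) ≤ 16 * EE V c := by
  have hn' : (1 : ℝ) ≤ n := by exact_mod_cast hn
  by_cases hE : EE V c = ⊤
  · rw [hE]; simp
  have hnn : (n : ℝ) + 1 = (n : ℝ) - 1 + 2 := by ring
  have hSm : ∀ a b : ℝ, MeasurableSet {z : Euc n | a < ‖z‖ ∧ ‖z‖ < b} := fun a b =>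
    (measurableSet_lt measurable_const measurable_norm).inter
      (measurableSet_lt measurable_norm measurable_const)
  have hum : AEMeasurable (fun z => u (c + z)) volume :=
    hu.aestronglyMeasurable.aemeasurable.comp_quasiMeasurePreserving
      (measurePreserving_add_left volume c).quasiMeasurePreserving
  have step : ∀ a b : ℝ, 0 < a → 0 < b → ∫⁻ z in {z : Euc n | a < ‖z‖ ∧ ‖z‖ < b},
      ‖u (c + z) - t‖ₑ ^ 2 * kap ((n : ℝ) + 1) z ≤ 16 * EE V c := by
    intro a b ha hb
    set S := {z : Euc n | a < ‖z‖ ∧ ‖z‖ < b} with hS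
    have main : ∀ s : ℝ, 0 < s → s ≤ 1 → ∫⁻ z in S, ‖u (c + z) - t‖ₑ ^ 2 * kap ((n : ℝ) + 1) z ≤
        16 * EE V c + 2 * (ENNReal.ofReal (a ^ (-((n : ℝ) + 1))) * ENNReal.ofReal (b ^ n) *
          (ENNReal.ofReal ((s ^ 2 * b) ^ (-(n : ℝ))) *
            ∫⁻ x in ball c (s ^ 2 * b), ‖u x - t‖ₑ ^ 2)) := by
      intro s hs hs1
      have hd := dil hn hu hV hW c (b := b) hs hs1 ha
      have hsm : AEMeasurable (fun z => u (c + s ^ 2 • z)) volume :=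
        hu.aestronglyMeasurable.aemeasurable.comp_quasiMeasurePreserving (qmp_smul (by positivity) c)
      have hr : ∫⁻ z, ‖u (c + s ^ 2 • z) - t‖ₑ ^ 2 * S.indicator (kap ((n : ℝ) + 1)) z ≤
          ENNReal.ofReal (a ^ (-((n : ℝ) + 1))) * ENNReal.ofReal (b ^ n) *
          (ENNReal.ofReal ((s ^ 2 * b) ^ (-(n : ℝ))) *
            ∫⁻ x in ball c (s ^ 2 * b), ‖u x - t‖ₑ ^ 2) := by
        calc _ ≤ ∫⁻ z, ENNReal.ofReal (a ^ (-((n : ℝ) + 1))) *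
              (fun w => (ball c (s ^ 2 * b)).indicator (fun x => ‖u x - t‖ₑ ^ 2) (c + w)) (s ^ 2 • z) := by
              apply lintegral_mono
              intro z
              simp only
              by_cases hz : z ∈ S
              · have hm : c + s ^ 2 • z ∈ ball c (s ^ 2 * b) := by
                  rw [mem_ball, dist_eq_norm, add_sub_cancel_left, norm_smul, Real.norm_eq_abs,
                    abs_of_pos (by positivity : 0 < s ^ 2)]
                  exact mul_lt_mul_of_pos_left hz.2 (by positivity)
                rw [indicator_of_mem hz, indicator_of_mem hm, mul_comm]
                gcongr
                exact kap_le ha (by linarith) hz.1.le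
              · rw [indicator_of_notMem hz]; simp
          _ = ENNReal.ofReal (a ^ (-((n : ℝ) + 1))) * (ENNReal.ofReal ((|s ^ 2| ^ n)⁻¹) *
              ∫⁻ x in ball c (s ^ 2 * b), ‖u x - t‖ₑ ^ 2) := by
              rw [lintegral_const_mul' _ _ ENNReal.ofReal_ne_top,
                lint_smul (by positivity : s ^ 2 ≠ 0) (fun w => (ball c (s ^ 2 * b)).indicator (fun x => ‖u x - t‖ₑ ^ 2) (c + w)),
                lintegral_add_left_eq_self, lintegral_indicator measurableSet_ball]
          _ = _ := by
              rw [← mul_assoc, ← mul_assoc]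
              congr 1
              rw [mul_assoc]
              congr 1
              rw [← ENNReal.ofReal_mul (by positivity)]
              congr 1
              rw [abs_of_pos (by positivity : 0 < s ^ 2), Real.rpow_neg (by positivity), Real.rpow_natCast,
                mul_pow]
              field_simp
      rw [hnn] at hr ⊢
      calc _ = ∫⁻ z, ‖u (c + z) - t‖ₑ ^ 2 * S.indicator (kap ((n : ℝ) - 1 + 2)) z := by
            rw [← lintegral_indicator (hSm a b)]
            congr 1; ext z
            by_cases hz : z ∈ S
            · rw [indicator_of_mem hz, indicator_of_mem hz]
            · rw [indicator_of_notMem hz, indicator_of_notMem hz, mul_zero]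
        _ ≤ ∫⁻ z, (2 * (‖u (c + z) - u (c + s ^ 2 • z)‖ₑ ^ 2 * S.indicator (kap ((n : ℝ) - 1 + 2)) z) +
            2 * (‖u (c + s ^ 2 • z) - t‖ₑ ^ 2 * S.indicator (kap ((n : ℝ) - 1 + 2)) z)) := by
            apply lintegral_mono
            intro z
            simp only
            rw [← mul_assoc, ← mul_assoc, ← add_mul]
            gcongr
            refine le_trans ?_ (ennreal_add_sq _ _)
            gcongr
            refine le_trans (le_of_eq ?_) (enorm_add_le _ _)
            rw [sub_add_sub_cancel]
        _ = 2 * (∫⁻ z, ‖u (c + z) - u (c + s ^ 2 • z)‖ₑ ^ 2 * S.indicator (kap ((n : ℝ) - 1 + 2)) z) +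
            2 * ∫⁻ z, ‖u (c + s ^ 2 • z) - t‖ₑ ^ 2 * S.indicator (kap ((n : ℝ) - 1 + 2)) z := by
            rw [lintegral_add_left', lintegral_const_mul' _ _ (by simp), lintegral_const_mul' _ _ (by simp)]
            apply AEMeasurable.const_mul
            exact ((hum.sub hsm).enorm.pow_const 2).mul ((kap_meas _).indicator (hSm a b)).aemeasurable
        _ ≤ 2 * (8 * EE V c) + 2 * _ := add_le_add (mul_le_mul_right hd 2) (mul_le_mul_right hr 2)
        _ = _ := by rw [← mul_assoc 2 8, show (2 : ℝ≥0∞) * 8 = 16 by norm_num]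
    have hlim : Tendsto (fun s : ℝ => s ^ 2 * b) (𝓝[>] 0) (𝓝[>] 0) := by
      apply tendsto_nhdsWithin_iff.2 ⟨?_, ?_⟩
      · have : Tendsto (fun s : ℝ => s ^ 2 * b) (𝓝 0) (𝓝 (0 ^ 2 * b)) :=
          (Continuous.tendsto (by fun_prop) 0)
        simp only [ne_eq, OfNat.ofNat_ne_zero, not_false_eq_true, zero_pow, zero_mul] at this
        exact this.mono_left nhdsWithin_le_nhds
      · filter_upwards [self_mem_nhdsWithin] with s hs
        have : (0 : ℝ) < s := hs
        exact mem_Ioi.2 (by positivity)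
    have h5 := (osc_tendsto hn hu hV hW c hE ht).comp hlim
    have h6 := Tendsto.const_add (16 * EE V c) (ENNReal.Tendsto.const_mul (a := 2)
      (ENNReal.Tendsto.const_mul (a := ENNReal.ofReal (a ^ (-((n : ℝ) + 1))) * ENNReal.ofReal (b ^ n))
        h5 (Or.inr (ENNReal.mul_ne_top ENNReal.ofReal_ne_top ENNReal.ofReal_ne_top))) (Or.inr (by simp)))
    simp only [mul_zero, add_zero] at h6
    refine ge_of_tendsto h6 ?_
    filter_upwards [Ioc_mem_nhdsGT (zero_lt_one' ℝ)] with s hs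
    exact main s hs.1 hs.2
  have hcov : ∫⁻ z, ‖u (c + z) - t‖ₑ ^ 2 * kap ((n : ℝ) + 1) z ≤ 16 * EE V c := by
    set Sk : ℕ → Set (Euc n) := fun k => {z : Euc n | 1 / ((k : ℝ) + 1) < ‖z‖ ∧ ‖z‖ < (k : ℝ) + 1} with hSk
    have hmono : Monotone Sk := by
      intro k l hkl z hz
      have hkl' : (k : ℝ) ≤ l := by exact_mod_cast hkl
      refine ⟨lt_of_le_of_lt ?_ hz.1, by linarith [hz.2]⟩
      exact one_div_le_one_div_of_le (by positivity) (by linarith)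
    have hun : {z : Euc n | z ≠ 0} ⊆ ⋃ k, Sk k := by
      intro z hz
      have hz : 0 < ‖z‖ := norm_pos_iff.2 hz
      obtain ⟨k, hk⟩ := exists_nat_one_div_lt hz
      obtain ⟨l, hl⟩ := exists_nat_gt ‖z‖
      have : z ∈ Sk (max k l) := by
        refine ⟨lt_of_le_of_lt ?_ hk, hl.trans ?_⟩
        · exact one_div_le_one_div_of_le (by positivity) (by push_cast; linarith [le_max_left (k : ℝ) l])
        · push_cast; linarith [le_max_right (k : ℝ) l]
      exact mem_iUnion.2 ⟨_, this⟩
    have : Nonempty (Fin n) := ⟨⟨0, hn⟩⟩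
    have h0 : ∀ᵐ z : Euc n, z ∈ ⋃ k, Sk k := by
      have : ∀ᵐ z : Euc n, z ≠ 0 := by simp [ae_iff]
      filter_upwards [this] with z hz using hun hz
    rw [← setLIntegral_univ, ← setLIntegral_congr (s := ⋃ k, Sk k) (by
      filter_upwards [h0] with z hz
      exact propext ⟨fun _ => trivial, fun _ => hz⟩)]
    rw [setLIntegral_iUnion_of_directed _ hmono.directed_le]
    exact iSup_le fun k => step _ _ (by positivity) (by positivity)
  refine le_trans (le_of_eq ?_) hcov
  rw [← lintegral_add_left_eq_self _ c]
  simp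

lemma kap_int {n : ℕ} (hn : 1 ≤ n) {p : ℝ} (hp : p < n) (R : ℝ) :
    ∫⁻ z in ball (0 : Euc n) R, kap p z < ⊤ := by
  have h := integrableOn_ball_of_norm_le_rpow (E := Euc n) (F := ℝ) (μ := volume) (by simpa using hn)
    (f := fun z => ‖z‖ ^ (-p)) (C := 1) (α := p) (r := R) (by simpa using hp)
    (Eventually.of_forall fun x => by
      rw [one_mul, Real.norm_eq_abs, abs_of_nonneg (by positivity)])
    (Measurable.aestronglyMeasurable (by fun_prop))
  have h2 := h.2
  rw [hasFiniteIntegral_iff_ofReal (Eventually.of_forall fun x => by positivity)] at h2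
  exact h2

lemma vol_zero {n : ℕ} {d C₀ : ℝ} (hdn : d < (n : ℝ) - 1) {Γ : Set (Euc n)}
    (hne : Γ.Nonempty) (hAR : AhlforsRegular n d C₀ Γ) : volume Γ = 0 := by
  obtain ⟨y0, hy0⟩ := hne
  have h : Γ ⊆ ⋃ k : ℕ, Γ ∩ ball y0 ((k : ℝ) + 1) := by
    intro x hx
    obtain ⟨k, hk⟩ := exists_nat_gt (dist x y0)
    exact mem_iUnion.2 ⟨k, hx, by rw [mem_ball]; linarith⟩
  refine measure_mono_null h (measure_iUnion_null fun k => ?_)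
  have hac : (volume : Measure (Euc n)) ≪ μH[(Module.finrank ℝ (Euc n) : ℝ)] :=
    Measure.absolutelyContinuous_isAddHaarMeasure _ _
  apply hac
  rcases Measure.hausdorffMeasure_zero_or_top (d₁ := d) (d₂ := (Module.finrank ℝ (Euc n) : ℝ))
    (by simp; linarith) (Γ ∩ ball y0 ((k : ℝ) + 1)) with h | h
  · exact h
  · exact absurd h ((hAR y0 hy0 _ (by positivity)).2.trans_lt ENNReal.ofReal_lt_top).ne

lemma sig_ball {n : ℕ} {d C₀ : ℝ} {Γ : Set (Euc n)} (hAR : AhlforsRegular n d C₀ Γ) {y : Euc n}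
    (hy : y ∈ Γ) {r : ℝ} (hr : 0 < r) :
    ENNReal.ofReal (C₀⁻¹ * r ^ d) ≤ μH[d].restrict Γ (ball y r) ∧
      μH[d].restrict Γ (ball y r) ≤ ENNReal.ofReal (C₀ * r ^ d) := by
  rw [Measure.restrict_apply measurableSet_ball, inter_comm]
  exact hAR y hy r hr

lemma sig_finite {n : ℕ} {d C₀ : ℝ} {Γ : Set (Euc n)}
    (hne : Γ.Nonempty) (hAR : AhlforsRegular n d C₀ Γ) :
    SigmaFinite ((μH[d] : Measure (Euc n)).restrict Γ) := by
  obtain ⟨y0, hy0⟩ := hne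
  refine ⟨⟨⟨fun k : ℕ => ball y0 ((k : ℝ) + 1), fun _ => trivial, fun k =>
    (sig_ball hAR hy0 (by positivity)).2.trans_lt ENNReal.ofReal_lt_top, ?_⟩⟩⟩
  refine eq_univ_of_forall fun x => ?_
  obtain ⟨k, hk⟩ := exists_nat_gt (dist x y0)
  exact mem_iUnion.2 ⟨k, by rw [mem_ball]; linarith⟩

lemma infD_pos {n : ℕ} {Γ : Set (Euc n)} (hne : Γ.Nonempty) (hcl : IsClosed Γ) {z : Euc n}
    (hz : z ∉ Γ) : 0 < infDist z Γ := (hcl.notMem_iff_infDist_pos hne).1 hz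

lemma pot_lower {n : ℕ} {d C₀ : ℝ} (hC₀ : 1 ≤ C₀) {Γ : Set (Euc n)}
    (hne : Γ.Nonempty) (hcl : IsClosed Γ) (hAR : AhlforsRegular n d C₀ Γ) {p : ℝ} (hp : 0 ≤ p)
    {z : Euc n} (hz : z ∉ Γ) :
    ENNReal.ofReal (C₀⁻¹ * 2 ^ (-p) * infDist z Γ ^ (d - p)) ≤
      ∫⁻ y in ball z (2 * infDist z Γ), kap p (z - y) ∂(μH[d].restrict Γ) := by
  set δ := infDist z Γ with hδ
  have hδ0 : 0 < δ := infD_pos hne hcl hz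
  obtain ⟨y0, hy0, hd0⟩ := hcl.exists_infDist_eq_dist hne z
  rw [← hδ] at hd0
  have hsub : ball y0 δ ⊆ ball z (2 * δ) := by
    intro y hy
    rw [mem_ball] at hy ⊢
    have := dist_triangle y y0 z
    rw [dist_comm y0 z] at this
    linarith
  calc _ = ENNReal.ofReal ((2 * δ) ^ (-p)) * ENNReal.ofReal (C₀⁻¹ * δ ^ d) := by
        rw [← ENNReal.ofReal_mul (by positivity)]
        congr 1
        rw [Real.mul_rpow (by norm_num) hδ0.le, sub_eq_add_neg, Real.rpow_add hδ0]
        ring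
    _ ≤ ENNReal.ofReal ((2 * δ) ^ (-p)) * μH[d].restrict Γ (ball y0 δ) := by
        gcongr
        exact (sig_ball hAR hy0 hδ0).1
    _ = ∫⁻ y in ball y0 δ, ENNReal.ofReal ((2 * δ) ^ (-p)) ∂(μH[d].restrict Γ) := by
        rw [setLIntegral_const]
    _ ≤ ∫⁻ y in ball y0 δ, kap p (z - y) ∂(μH[d].restrict Γ) := by
        apply lintegral_mono_ae
        have hΓ : ∀ᵐ y ∂((μH[d].restrict Γ).restrict (ball y0 δ)), y ∈ Γ :=
          ae_restrict_of_ae (ae_restrict_mem hcl.measurableSet)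
        filter_upwards [hΓ, ae_restrict_mem measurableSet_ball] with y hy hyb
        apply kap_ge hp
        · intro h
          rw [sub_eq_zero] at h
          exact hz (h ▸ hy)
        · rw [← dist_eq_norm, dist_comm]; exact (mem_ball.1 (hsub hyb)).le
    _ ≤ _ := lintegral_mono_set hsub

lemma pot_upper {n : ℕ} {d C₀ : ℝ} (hC₀ : 1 ≤ C₀) {Γ : Set (Euc n)}
    (hne : Γ.Nonempty) (hcl : IsClosed Γ) (hAR : AhlforsRegular n d C₀ Γ) {p : ℝ} (hp : 0 ≤ p)
    (hpd : d < p) : ∃ C : ℝ≥0∞, C ≠ ⊤ ∧ ∀ z ∉ Γ,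
      ∫⁻ y, kap p (z - y) ∂(μH[d].restrict Γ) ≤ C * ENNReal.ofReal (infDist z Γ ^ (d - p)) := by
  set q : ℝ := 2 ^ (d - p) with hq
  have hq0 : 0 < q := by positivity
  have hq1 : q < 1 := Real.rpow_lt_one_of_one_lt_of_neg (by norm_num) (by linarith)
  refine ⟨ENNReal.ofReal (C₀ * 4 ^ d) * (1 - ENNReal.ofReal q)⁻¹, ?_, ?_⟩
  · apply ENNReal.mul_ne_top ENNReal.ofReal_ne_top
    rw [ENNReal.inv_ne_top]
    have : ENNReal.ofReal q < 1 := by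
      rw [← ENNReal.ofReal_one]
      exact (ENNReal.ofReal_lt_ofReal_iff (by norm_num)).2 hq1
    exact (tsub_pos_of_lt this).ne'
  intro z hz
  set δ := infDist z Γ with hδ
  have hδ0 : 0 < δ := infD_pos hne hcl hz
  obtain ⟨y0, hy0, hd0⟩ := hcl.exists_infDist_eq_dist hne z
  rw [← hδ] at hd0
  have hpt : ∀ y ∈ Γ, kap p (z - y) ≤
      ∑' k : ℕ, (ball y0 (2 ^ (k + 2) * δ)).indicator (fun _ => ENNReal.ofReal ((2 ^ k * δ) ^ (-p))) y := by
    intro y hy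
    have hyz : δ ≤ dist z y := infDist_le_dist_of_mem hy
    obtain ⟨k, hk1, hk2⟩ := exists_nat_pow_near (x := dist z y / δ) (y := (2 : ℝ))
      (by rwa [le_div_iff₀ hδ0, one_mul]) (by norm_num)
    rw [le_div_iff₀ hδ0] at hk1
    rw [div_lt_iff₀ hδ0] at hk2
    have hmem : y ∈ ball y0 (2 ^ (k + 2) * δ) := by
      rw [mem_ball]
      have h1 := dist_triangle y z y0
      rw [dist_comm y z] at h1
      have h2 : (1 : ℝ) ≤ 2 ^ (k + 1) := one_le_pow₀ (by norm_num)
      have h3 : (2 : ℝ) ^ (k + 2) = 2 * 2 ^ (k + 1) := by ring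
      nlinarith
    refine le_trans ?_ (ENNReal.le_tsum k)
    rw [indicator_of_mem hmem]
    apply kap_le (by positivity) hp
    rwa [← dist_eq_norm]
  calc ∫⁻ y, kap p (z - y) ∂(μH[d].restrict Γ)
      ≤ ∫⁻ y, ∑' k : ℕ, (ball y0 (2 ^ (k + 2) * δ)).indicator
          (fun _ => ENNReal.ofReal ((2 ^ k * δ) ^ (-p))) y ∂(μH[d].restrict Γ) := by
        apply lintegral_mono_ae
        filter_upwards [ae_restrict_mem hcl.measurableSet] with y hy using hpt y hy
    _ = ∑' k : ℕ, ENNReal.ofReal ((2 ^ k * δ) ^ (-p)) *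
          μH[d].restrict Γ (ball y0 (2 ^ (k + 2) * δ)) := by
        rw [lintegral_tsum fun k => (measurable_const.indicator measurableSet_ball).aemeasurable]
        congr 1; ext k
        rw [lintegral_indicator measurableSet_ball, setLIntegral_const]
    _ ≤ ∑' k : ℕ, ENNReal.ofReal (C₀ * 4 ^ d) * ENNReal.ofReal (δ ^ (d - p)) *
          ENNReal.ofReal q ^ k := by
        apply ENNReal.tsum_le_tsum
        intro k
        calc _ ≤ ENNReal.ofReal ((2 ^ k * δ) ^ (-p)) * ENNReal.ofReal (C₀ * (2 ^ (k + 2) * δ) ^ d) := by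
              gcongr
              exact (sig_ball hAR hy0 (by positivity)).2
          _ = _ := by
              rw [← ENNReal.ofReal_pow hq0.le, ← ENNReal.ofReal_mul (by positivity),
                ← ENNReal.ofReal_mul (by positivity), ← ENNReal.ofReal_mul (by positivity)]
              congr 1
              have e1 : (2 : ℝ) ^ (k + 2) * δ = 4 * (2 ^ k * δ) := by ring
              have e2 : q ^ k = ((2 : ℝ) ^ k) ^ (d - p) := by
                rw [hq, ← Real.rpow_natCast, ← Real.rpow_natCast, ← Real.rpow_mul (by norm_num),
                  ← Real.rpow_mul (by norm_num), mul_comm]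
              have e3 : δ ^ (d - p) * ((2 : ℝ) ^ k) ^ (d - p) = (2 ^ k * δ) ^ (-p) * (2 ^ k * δ) ^ d := by
                rw [← Real.mul_rpow hδ0.le (by positivity), ← Real.rpow_add (by positivity), mul_comm δ]
                congr 1; ring
              have e4 : (4 * ((2 : ℝ) ^ k * δ)) ^ d = 4 ^ d * (2 ^ k * δ) ^ d :=
                Real.mul_rpow (by norm_num) (by positivity)
              rw [e1, e2, e4]
              linear_combination (-(C₀ * 4 ^ d)) * e3
    _ = _ := by
        rw [ENNReal.tsum_mul_left, ENNReal.tsum_geometric]; ring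

lemma dinv_int {n : ℕ} (hn : 2 ≤ n) {d C₀ : ℝ} (hd0 : 0 < d) (hdn : d < (n : ℝ) - 1) (hC₀ : 1 ≤ C₀) {Γ : Set (Euc n)}
    (hne : Γ.Nonempty) (hcl : IsClosed Γ) (hAR : AhlforsRegular n d C₀ Γ) (R : ℝ) :
    ∫⁻ z in ball 0 R, ENNReal.ofReal ((infDist z Γ)⁻¹) < ⊤ := by
  have hv := vol_zero hdn hne hAR
  have := sig_finite hne hAR
  obtain ⟨y0, hy0⟩ := id hne
  set R1 := |R| + 2 * (|R| + ‖y0‖) with hR1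
  have hR1p : 0 ≤ R1 := by positivity
  set c := C₀⁻¹ * 2 ^ (-(d + 1)) with hc
  have hc0 : 0 < c := by positivity
  have hpt : ∀ᵐ z ∂(volume.restrict (ball (0 : Euc n) R)), ENNReal.ofReal ((infDist z Γ)⁻¹) ≤
      ENNReal.ofReal c⁻¹ * ∫⁻ y in ball 0 R1, kap (d + 1) (z - y) ∂(μH[d].restrict Γ) := by
    have hΓ : ∀ᵐ z ∂(volume.restrict (ball (0 : Euc n) R)), z ∉ Γ :=
      ae_restrict_of_ae (measure_eq_zero_iff_ae_notMem.1 hv)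
    filter_upwards [hΓ, ae_restrict_mem measurableSet_ball] with z hz hzb
    have hδ0 := infD_pos hne hcl hz
    have h := pot_lower hC₀ hne hcl hAR (p := d + 1) (by linarith) hz
    have hsub : ball z (2 * infDist z Γ) ⊆ ball 0 R1 := by
      intro y hy
      rw [mem_ball] at hy
      rw [mem_ball, dist_zero_right] at hzb ⊢
      have h1 : infDist z Γ ≤ ‖z‖ + ‖y0‖ := by
        refine (infDist_le_dist_of_mem hy0).trans ?_
        rw [dist_eq_norm]; exact norm_sub_le _ _
      have h2 : ‖y‖ ≤ dist y z + ‖z‖ := by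
        rw [dist_eq_norm]
        have := norm_add_le (y - z) z
        rwa [sub_add_cancel] at this
      have := le_abs_self R
      linarith
    calc _ = ENNReal.ofReal c⁻¹ * ENNReal.ofReal (c * infDist z Γ ^ (d - (d + 1))) := by
          rw [← ENNReal.ofReal_mul (by positivity), ← mul_assoc, inv_mul_cancel₀ hc0.ne', one_mul,
            show d - (d + 1) = -1 by ring, Real.rpow_neg_one]
      _ ≤ _ := by
          gcongr
          exact h.trans (lintegral_mono_set hsub)
  refine (lintegral_mono_ae hpt).trans_lt ?_
  rw [lintegral_const_mul' _ _ ENNReal.ofReal_ne_top]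
  apply ENNReal.mul_lt_top ENNReal.ofReal_lt_top
  rw [lintegral_lintegral_swap]
  swap
  · apply Measurable.aemeasurable
    apply (kap_meas _).comp (f := fun p : Euc n × Euc n => p.1 - p.2)
    fun_prop
  calc _ ≤ ∫⁻ y in ball 0 R1, (∫⁻ z in ball (0 : Euc n) (|R| + R1), kap (d + 1) z) ∂(μH[d].restrict Γ) := by
        apply setLIntegral_mono' measurableSet_ball
        intro y hy
        rw [← lintegral_indicator measurableSet_ball, ← lintegral_indicator measurableSet_ball,
          ← lintegral_sub_right_eq_self ((ball (0 : Euc n) (|R| + R1)).indicator (kap (d + 1))) y]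
        apply lintegral_mono
        intro z
        by_cases hz : z ∈ ball (0 : Euc n) R
        · have : z - y ∈ ball (0 : Euc n) (|R| + R1) := by
            rw [mem_ball, dist_zero_right] at hz hy ⊢
            have := norm_sub_le z y
            have := le_abs_self R
            linarith
          beta_reduce
          rw [indicator_of_mem hz, indicator_of_mem this]
        · beta_reduce
          rw [indicator_of_notMem hz]; exact zero_le
    _ = (∫⁻ z in ball (0 : Euc n) (|R| + R1), kap (d + 1) z) * μH[d].restrict Γ (ball 0 R1) :=
        setLIntegral_const _ _
    _ < ⊤ := by
        apply ENNReal.mul_lt_top (kap_int (by omega) (by linarith) _)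
        have hsub : ball (0 : Euc n) R1 ⊆ ball y0 (R1 + ‖y0‖ + 1) := by
          intro y hy
          rw [mem_ball, dist_zero_right] at hy
          rw [mem_ball, dist_eq_norm]
          have := norm_sub_le y y0
          linarith
        exact (measure_mono hsub).trans_lt
          ((sig_ball hAR hy0 (by positivity)).2.trans_lt ENNReal.ofReal_lt_top)

lemma w_meas {n : ℕ} {d : ℝ} {Γ : Set (Euc n)} : Measurable (weightW n d Γ) := by
  unfold weightW
  exact (measurable_infDist).pow_const _

lemma W_energy {n : ℕ} {d : ℝ} {Γ : Set (Euc n)} (hcl : IsClosed Γ) {u : Euc n → ℝ}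
    {v : Euc n → Euc n} (hW : MemW n d Γ u v) :
    ∫⁻ x in Γᶜ, ENNReal.ofReal (weightW n d Γ x) * ‖v x‖ₑ ^ 2 < ⊤ := by
  have h := hW.l2
  unfold measW at h
  rw [setLIntegral_withDensity_eq_setLIntegral_mul_non_measurable _ w_meas.ennreal_ofReal _
    hcl.isOpen_compl.measurableSet (by simp)] at h
  refine lt_of_eq_of_lt ?_ h
  congr 1; ext x
  simp only [Pi.mul_apply]
  rw [ENNReal.ofReal_pow (norm_nonneg _), ofReal_norm]

lemma V_L2loc {n : ℕ} {d : ℝ} (hdn : d < (n : ℝ) - 1) {Γ : Set (Euc n)} (hne : Γ.Nonempty)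
    (hcl : IsClosed Γ) {u : Euc n → ℝ} {v : Euc n → Euc n} (hW : MemW n d Γ u v) :
    L2loc (Γᶜ.indicator v) := by
  have hO := hcl.isOpen_compl.measurableSet
  refine ⟨?_, fun R => ?_⟩
  · rw [aestronglyMeasurable_indicator_iff hO]
    exact hW.gradLocInt.aestronglyMeasurable
  obtain ⟨y0, hy0⟩ := id hne
  set R1 := |R| + ‖y0‖ + 1 with hR1
  have hR1p : 0 < R1 := by positivity
  set c := R1 ^ (d + 1 - (n : ℝ)) with hc
  have hc0 : 0 < c := by positivity
  have h1 : ∫⁻ x in ball 0 R, ‖Γᶜ.indicator v x‖ₑ ^ 2 ≤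
      ENNReal.ofReal c⁻¹ * ∫⁻ x in Γᶜ, ENNReal.ofReal (weightW n d Γ x) * ‖v x‖ₑ ^ 2 := by
    rw [← lintegral_const_mul' _ _ ENNReal.ofReal_ne_top, ← lintegral_indicator hO,
      ← lintegral_indicator measurableSet_ball]
    apply lintegral_mono
    intro x
    beta_reduce
    by_cases hx : x ∈ ball (0 : Euc n) R
    swap
    · rw [indicator_of_notMem hx]; exact zero_le
    rw [indicator_of_mem hx]
    by_cases hxΓ : x ∈ Γᶜ
    swap
    · rw [indicator_of_notMem hxΓ]; simp
    rw [indicator_of_mem hxΓ, indicator_of_mem hxΓ, ← mul_assoc, ← ENNReal.ofReal_mul (by positivity)]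
    have hw : c ≤ weightW n d Γ x := by
      apply Real.rpow_le_rpow_of_nonpos (infD_pos hne hcl hxΓ) _ (by linarith)
      refine (infDist_le_dist_of_mem hy0).trans ?_
      rw [dist_eq_norm]
      rw [mem_ball, dist_zero_right] at hx
      have := norm_sub_le x y0
      have := le_abs_self R
      linarith
    have : 1 ≤ ENNReal.ofReal (c⁻¹ * weightW n d Γ x) := by
      rw [ENNReal.one_le_ofReal, ← div_eq_inv_mul, le_div_iff₀ hc0, one_mul]
      exact hw
    calc ‖v x‖ₑ ^ 2 = 1 * ‖v x‖ₑ ^ 2 := (one_mul _).symm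
      _ ≤ _ := by gcongr
  exact h1.trans_lt (ENNReal.mul_lt_top ENNReal.ofReal_lt_top (W_energy hcl hW))

lemma EE_int {n : ℕ} (hn : 2 ≤ n) {d C₀ : ℝ} (hdn : d < (n : ℝ) - 1) (hC₀ : 1 ≤ C₀) {Γ : Set (Euc n)}
    (hne : Γ.Nonempty) (hcl : IsClosed Γ) (hAR : AhlforsRegular n d C₀ Γ) {u : Euc n → ℝ}
    {v : Euc n → Euc n} (hW : MemW n d Γ u v) :
    ∫⁻ y, EE (Γᶜ.indicator v) y ∂(μH[d].restrict Γ) < ⊤ := by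
  have := sig_finite hne hAR
  have hO := hcl.isOpen_compl.measurableSet
  have hn' : (2 : ℝ) ≤ n := by exact_mod_cast hn
  have hVm := (V_L2loc hdn hne hcl hW).1
  obtain ⟨C, hC, hCb⟩ := pot_upper hC₀ hne hcl hAR (p := (n : ℝ) - 1) (by linarith) hdn
  unfold EE
  rw [lintegral_lintegral_swap]
  swap
  · have h1 : AEMeasurable (fun p : Euc n × Euc n => kap ((n : ℝ) - 1) (p.2 - p.1))
        ((μH[d].restrict Γ).prod volume) :=
      ((kap_meas _).comp (measurable_snd.sub measurable_fst)).aemeasurable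
    have h2 := ((hVm.comp_quasiMeasurePreserving
      (Measure.quasiMeasurePreserving_snd (μ := μH[d].restrict Γ))).enorm).pow_const 2
    exact h1.mul h2
  calc _ ≤ ∫⁻ x, Γᶜ.indicator (fun x => C * (ENNReal.ofReal (weightW n d Γ x) * ‖v x‖ₑ ^ 2)) x := by
        apply lintegral_mono
        intro x
        beta_reduce
        by_cases hx : x ∈ Γᶜ
        · rw [indicator_of_mem hx, indicator_of_mem hx, lintegral_mul_const' _ _ (by simp), ← mul_assoc]
          gcongr
          have := hCb x hx
          rw [show d - ((n : ℝ) - 1) = d + 1 - n by ring] at this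
          exact this
        · rw [indicator_of_notMem hx, indicator_of_notMem hx]; simp
    _ = C * ∫⁻ x in Γᶜ, ENNReal.ofReal (weightW n d Γ x) * ‖v x‖ₑ ^ 2 := by
        rw [lintegral_indicator hO, lintegral_const_mul' _ _ hC]
    _ < ⊤ := ENNReal.mul_lt_top hC.lt_top (W_energy hcl hW)

lemma moll_lip {n : ℕ} (j : ℕ) {f : Euc n → ℝ} {K : ℝ≥0} (hf : LipschitzWith K f) :
    LipschitzWith K (moll j f) := by
  have hi : ∀ x, Integrable (fun t => rhoK n j t • f (x - t)) volume := by
    intro x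
    apply Continuous.integrable_of_hasCompactSupport
    · exact (rhoK_contDiff n j).continuous.smul (hf.continuous.comp (by fun_prop))
    · exact (rhoK_cpt n j).smul_right
  apply LipschitzWith.of_dist_le_mul
  intro x y
  rw [dist_eq_norm, moll_eq, moll_eq, ← integral_sub (hi x) (hi y)]
  have hr : Integrable (rhoK n j) volume :=
    (rhoK_contDiff n j).continuous.integrable_of_hasCompactSupport (rhoK_cpt n j)
  calc _ ≤ ∫ t, rhoK n j t * (K * dist x y) := by
        apply norm_integral_le_of_norm_le (hr.mul_const _)
        refine Eventually.of_forall fun t => ?_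
        rw [← smul_sub, norm_smul, Real.norm_of_nonneg (rhoK_nonneg n j t)]
        refine mul_le_mul_of_nonneg_left ?_ (rhoK_nonneg n j t)
        have := hf.dist_le_mul (x - t) (y - t)
        rwa [dist_eq_norm (f (x-t)), dist_sub_right] at this
    _ = _ := by rw [integral_mul_const, rhoK_integral, one_mul]

lemma moll_const_on {n : ℕ} (j : ℕ) {f : Euc n → ℝ} {x : Euc n} {c : ℝ}
    (h : ∀ y ∈ ball x (1 / ((j : ℝ) + 1)), f y = c) : moll j f x = c := by
  rw [moll_eq]
  have : ∀ t, rhoK n j t • f (x - t) = rhoK n j t * c := by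
    intro t
    by_cases ht : 1 / ((j : ℝ) + 1) ≤ ‖t‖
    · rw [rhoK_zero ht]; simp
    · rw [h, smul_eq_mul]
      rw [mem_ball, dist_eq_norm]; push Not at ht
      simpa using ht
  simp_rw [this]
  rw [integral_mul_const, rhoK_integral, one_mul]

lemma norm_grad {n : ℕ} (f : Euc n → ℝ) (x : Euc n) : ‖gradient f x‖ = ‖fderiv ℝ f x‖ := by
  show ‖(InnerProductSpace.toDual ℝ (Euc n)).symm (fderiv ℝ f x)‖ = _
  exact LinearIsometryEquiv.norm_map _ _

lemma grad_mul {n : ℕ} {f g : Euc n → ℝ} {a b x : Euc n} (hf : HasGradientAt f a x)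
    (hg : HasGradientAt g b x) : HasGradientAt (fun y => f y * g y) (f x • b + g x • a) x := by
  have h := hf.hasFDerivAt.mul hg.hasFDerivAt
  refine hasGrad_of h ?_
  intro y
  simp [inner_add_left, inner_smul_left]

lemma cut1 {n : ℕ} {Γ : Set (Euc n)} (hne : Γ.Nonempty) (hcl : IsClosed Γ) (k : ℕ) :
    ∃ ψ : Euc n → ℝ, ContDiff ℝ (⊤ : ℕ∞) ψ ∧ (∀ x, 0 ≤ ψ x ∧ ψ x ≤ 1) ∧ tsupport ψ ⊆ Γᶜ ∧
      (∀ x, x ∉ Γ → ‖gradient ψ x‖ ≤ 4 / infDist x Γ) ∧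
      ∀ x, 4 / ((k : ℝ) + 1) < infDist x Γ → ψ =ᶠ[𝓝 x] 1 := by
  set r : ℝ := 1 / ((k : ℝ) + 1) with hr
  have hr0 : 0 < r := by positivity
  set θ : Euc n → ℝ := fun x => max 0 (min 1 (((k : ℝ) + 1) * infDist x Γ - 2)) with hθ
  have hk : ((k : ℝ) + 1) * r = 1 := by rw [hr]; field_simp
  have hk0 : (0 : ℝ) < (k : ℝ) + 1 := by positivity
  have hlip : LipschitzWith ((k : ℝ≥0) + 1) θ := by
    apply LipschitzWith.const_max
    apply LipschitzWith.const_min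
    apply LipschitzWith.of_dist_le_mul
    intro x y
    have := (lipschitz_infDist_pt Γ).dist_le_mul x y
    rw [Real.dist_eq] at this ⊢
    rw [show ((k : ℝ) + 1) * infDist x Γ - 2 - (((k : ℝ) + 1) * infDist y Γ - 2) =
      ((k : ℝ) + 1) * (infDist x Γ - infDist y Γ) by ring, abs_mul, abs_of_pos hk0]
    push_cast at this ⊢
    rw [one_mul] at this
    gcongr
  have hd : ∀ x y, y ∈ ball x r → |infDist x Γ - infDist y Γ| < r := by
    intro x y hy
    have := (lipschitz_infDist_pt Γ).dist_le_mul y x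
    rw [Real.dist_eq, abs_sub_comm] at this
    push_cast at this
    rw [one_mul] at this
    exact this.trans_lt hy
  have hz : ∀ x, infDist x Γ < r → moll k θ x = 0 := by
    intro x hx
    apply moll_const_on
    intro y hy
    have := abs_lt.1 (hd x y hy)
    have h2 : ((k : ℝ) + 1) * infDist y Γ ≤ ((k : ℝ) + 1) * (2 * r) := by gcongr; linarith
    rw [hθ]; beta_reduce
    apply max_eq_left
    refine (min_le_right _ _).trans ?_
    linarith
  have h1 : ∀ x, 4 * r < infDist x Γ → moll k θ x = 1 := by
    intro x hx
    apply moll_const_on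
    intro y hy
    have := abs_lt.1 (hd x y hy)
    have h2 : ((k : ℝ) + 1) * (3 * r) ≤ ((k : ℝ) + 1) * infDist y Γ := by gcongr; linarith
    rw [hθ]; beta_reduce
    rw [min_eq_left (by linarith)]; simp
  have hev : ∀ x, 4 * r < infDist x Γ → moll k θ =ᶠ[𝓝 x] 1 := by
    intro x hx
    have : {y | 4 * r < infDist y Γ} ∈ 𝓝 x :=
      (isOpen_lt continuous_const (continuous_infDist_pt Γ)).mem_nhds hx
    filter_upwards [this] with y hy
    exact h1 y hy
  refine ⟨moll k θ, moll_contDiff k hlip.continuous.locallyIntegrable, ?_, ?_, ?_, ?_⟩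
  · intro x
    have hr' : Integrable (rhoK n k) volume :=
      (rhoK_contDiff n k).continuous.integrable_of_hasCompactSupport (rhoK_cpt n k)
    have hi : Integrable (fun t => rhoK n k t • θ (x - t)) volume := by
      apply Continuous.integrable_of_hasCompactSupport
      · exact (rhoK_contDiff n k).continuous.smul (hlip.continuous.comp (by fun_prop))
      · exact (rhoK_cpt n k).smul_right
    rw [moll_eq]
    constructor
    · apply integral_nonneg
      intro t
      exact mul_nonneg (rhoK_nonneg n k t) (le_max_left _ _)
    · rw [← rhoK_integral n k]
      apply integral_mono hi hr'
      intro t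
      apply mul_le_of_le_one_right (rhoK_nonneg n k t)
      exact max_le zero_le_one (min_le_left _ _)
  · have : tsupport (moll k θ) ⊆ {x | r ≤ infDist x Γ} := by
      apply closure_minimal
      · intro x hx
        by_contra h
        exact hx (hz x (not_le.1 h))
      · exact isClosed_le continuous_const (continuous_infDist_pt Γ)
    intro x hx hxΓ
    have := this hx
    rw [mem_setOf_eq, infDist_zero_of_mem hxΓ] at this
    linarith
  · intro x hx
    have hp := infD_pos hne hcl hx
    rw [norm_grad]
    by_cases h4 : 4 * r < infDist x Γ
    · rw [(hev x h4).fderiv_eq]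
      simp only [Pi.one_def, fderiv_fun_const, Pi.zero_apply, norm_zero]
      positivity
    · have h := norm_fderiv_le_of_lipschitz ℝ (moll_lip k hlip) (x₀ := x)
      push_cast at h
      refine h.trans ?_
      rw [le_div_iff₀ hp]
      push Not at h4
      calc ((k : ℝ) + 1) * infDist x Γ ≤ ((k : ℝ) + 1) * (4 * r) := by gcongr
        _ = 4 := by linarith
  · intro x hx
    apply hev
    rw [hr]
    linarith [hx, div_eq_mul_one_div (4 : ℝ) ((k : ℝ) + 1)]

lemma cut2 (n : ℕ) (y0 : Euc n) :
    ∃ (φ : ℕ → Euc n → ℝ) (C : ℝ), 0 ≤ C ∧ ∀ k, ContDiff ℝ (⊤ : ℕ∞) (φ k) ∧ HasCompactSupport (φ k) ∧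
      (∀ x, 0 ≤ φ k x ∧ φ k x ≤ 1) ∧ (∀ x, ‖gradient (φ k) x‖ * dist x y0 ≤ C) ∧
      ∀ x ∈ ball (0 : Euc n) ((k : ℝ) + 1), φ k =ᶠ[𝓝 x] 1 := by
  let B : ContDiffBump (0 : Euc n) := ⟨1, 2, by norm_num, by norm_num⟩
  have hBs : ContDiff ℝ (⊤ : ℕ∞) B := B.contDiff
  obtain ⟨M, hM⟩ : ∃ M, ∀ x, ‖fderiv ℝ B x‖ ≤ M := by
    have hc : HasCompactSupport (fderiv ℝ B) := B.hasCompactSupport.fderiv ℝ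
    exact hc.exists_bound_of_continuous (hBs.continuous_fderiv (by simp))
  have hM0 : 0 ≤ M := (norm_nonneg _).trans (hM 0)
  refine ⟨fun k x => B (((k : ℝ) + 1)⁻¹ • x), M * (2 + ‖y0‖), by positivity, fun k => ?_⟩
  set r : ℝ := ((k : ℝ) + 1)⁻¹ with hr
  have hr0 : 0 < r := by positivity
  have hr1 : r ≤ 1 := inv_le_one_of_one_le₀ (by linarith [(Nat.cast_nonneg k : (0:ℝ) ≤ k)])
  have hkr : ((k : ℝ) + 1) * r = 1 := by rw [hr]; field_simp
  have hz : ∀ x : Euc n, 2 < r * ‖x‖ → B (r • x) = 0 := by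
    intro x hx
    apply B.zero_of_le_dist
    rw [dist_zero_right, norm_smul, Real.norm_of_nonneg hr0.le]
    exact hx.le
  refine ⟨hBs.comp (contDiff_const_smul r), ?_, ?_, ?_, ?_⟩
  · apply HasCompactSupport.intro (isCompact_closedBall (0 : Euc n) (2 / r))
    intro x hx
    apply hz
    rw [mem_closedBall, dist_zero_right, not_le, div_lt_iff₀ hr0] at hx
    linarith
  · intro x
    exact ⟨B.nonneg, B.le_one⟩
  · intro x
    rw [norm_grad]
    by_cases hx : 2 < r * ‖x‖
    · have : (fun x => B (r • x)) =ᶠ[𝓝 x] fun _ => (0 : ℝ) := by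
        have : {y : Euc n | 2 < r * ‖y‖} ∈ 𝓝 x :=
          (isOpen_lt continuous_const (by fun_prop)).mem_nhds hx
        filter_upwards [this] with y hy
        exact hz y hy
      rw [this.fderiv_eq]
      simp only [fderiv_fun_const, Pi.zero_apply, norm_zero, zero_mul]
      positivity
    · push Not at hx
      have hf : HasFDerivAt (fun x => B (r • x)) (r • fderiv ℝ B (r • x)) x := by
        have h1 : HasFDerivAt B (fderiv ℝ B (r • x)) (r • x) :=
          (hBs.differentiable (by simp) _).hasFDerivAt
        have h2 : HasFDerivAt (fun y : Euc n => r • y) (r • ContinuousLinearMap.id ℝ (Euc n)) x :=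
          (hasFDerivAt_id x).const_smul r
        have h3 := h1.comp x h2
        have h4 : (fderiv ℝ B (r • x)).comp (r • ContinuousLinearMap.id ℝ (Euc n)) =
          r • fderiv ℝ B (r • x) := by ext y; simp
        rw [h4] at h3
        exact h3
      rw [hf.fderiv, norm_smul, Real.norm_of_nonneg hr0.le]
      have h1 : r * dist x y0 ≤ 2 + ‖y0‖ := by
        rw [dist_eq_norm]
        calc r * ‖x - y0‖ ≤ r * (‖x‖ + ‖y0‖) := by gcongr; exact norm_sub_le _ _
          _ = r * ‖x‖ + r * ‖y0‖ := by ring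
          _ ≤ 2 + 1 * ‖y0‖ := by gcongr
          _ = _ := by ring
      calc r * ‖fderiv ℝ B (r • x)‖ * dist x y0 = ‖fderiv ℝ B (r • x)‖ * (r * dist x y0) := by ring
        _ ≤ _ := by gcongr; exact hM _
  · intro x hx
    filter_upwards [isOpen_ball.mem_nhds hx] with y hy
    apply B.one_of_mem_closedBall
    rw [mem_closedBall, dist_zero_right, norm_smul, Real.norm_of_nonneg hr0.le]
    rw [mem_ball, dist_zero_right] at hy
    show r * ‖y‖ ≤ 1
    rw [← hkr, mul_comm r]
    gcongr

lemma cutoffs {n : ℕ} {Γ : Set (Euc n)} (hne : Γ.Nonempty) (hcl : IsClosed Γ) :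
    ∃ (η : ℕ → Euc n → ℝ) (C : ℝ), 0 ≤ C ∧ (∀ k, ContDiff ℝ (⊤ : ℕ∞) (η k) ∧ HasCompactSupport (η k) ∧
      tsupport (η k) ⊆ Γᶜ ∧ ∀ x, 0 ≤ η k x ∧ η k x ≤ 1) ∧
      (∀ k x, x ∉ Γ → ‖gradient (η k) x‖ ≤ C * (infDist x Γ)⁻¹) ∧
      ∀ x, x ∉ Γ → ∀ᶠ k in atTop, η k x = 1 ∧ gradient (η k) x = 0 := by
  obtain ⟨y0, hy0⟩ := id hne
  choose ψ hψ1 hψ2 hψ3 hψ4 hψ5 using cut1 hne hcl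
  obtain ⟨φ, C, hC, hφ⟩ := cut2 n y0
  choose hφ1 hφ2 hφ3 hφ4 hφ5 using hφ
  refine ⟨fun k x => ψ k x * φ k x, 4 + C, by positivity, fun k => ⟨(hψ1 k).mul (hφ1 k),
    (hφ2 k).mul_left, ?_, fun x => ⟨mul_nonneg (hψ2 k x).1 (hφ3 k x).1,
      mul_le_one₀ (hψ2 k x).2 (hφ3 k x).1 (hφ3 k x).2⟩⟩, ?_, ?_⟩
  · exact (tsupport_mul_subset_left).trans (hψ3 k)
  · intro k x hx
    have hp := infD_pos hne hcl hx
    have h1 : HasGradientAt (ψ k) (gradient (ψ k) x) x :=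
      ((hψ1 k).differentiable (by simp) x).hasGradientAt
    have h2 : HasGradientAt (φ k) (gradient (φ k) x) x :=
      ((hφ1 k).differentiable (by simp) x).hasGradientAt
    rw [(grad_mul h1 h2).gradient]
    have h3 : ‖gradient (φ k) x‖ ≤ C * (infDist x Γ)⁻¹ := by
      rw [← div_eq_mul_inv, le_div_iff₀ hp]
      refine le_trans ?_ (hφ4 k x)
      gcongr
      exact infDist_le_dist_of_mem hy0
    have h4 := hψ4 k x hx
    refine (norm_add_le _ _).trans ?_
    rw [norm_smul, norm_smul, Real.norm_of_nonneg (hψ2 k x).1, Real.norm_of_nonneg (hφ3 k x).1]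
    have h5 : ψ k x * ‖gradient (φ k) x‖ ≤ 1 * ‖gradient (φ k) x‖ := by gcongr; exact (hψ2 k x).2
    have h6 : φ k x * ‖gradient (ψ k) x‖ ≤ 1 * ‖gradient (ψ k) x‖ := by gcongr; exact (hφ3 k x).2
    rw [div_eq_mul_inv] at h4
    linarith
  · intro x hx
    have hp := infD_pos hne hcl hx
    have t1 : Tendsto (fun k : ℕ => 4 * (1 / ((k : ℝ) + 1))) atTop (𝓝 (4 * 0)) :=
      tendsto_one_div_add_atTop_nhds_zero_nat.const_mul 4
    rw [mul_zero] at t1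
    filter_upwards [t1.eventually_lt_const hp, eventually_ge_atTop ⌈‖x‖⌉₊] with k hk1 hk2
    have e1 := hψ5 k x (by rw [div_eq_mul_one_div]; exact hk1)
    have e2 := hφ5 k x (by
      rw [mem_ball, dist_zero_right]
      have : ‖x‖ ≤ k := (Nat.le_ceil _).trans (by exact_mod_cast hk2)
      linarith)
    have e3 : (fun x => ψ k x * φ k x) =ᶠ[𝓝 x] fun _ => (1 : ℝ) := by
      filter_upwards [e1, e2] with y h1 h2
      rw [h1, h2]; simp
    refine ⟨e3.eq_of_nhds, ?_⟩
    rw [← norm_eq_zero, norm_grad, e3.fderiv_eq]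
    simp

lemma inner_int {n : ℕ} {f g : Euc n → Euc n} (hf : MemLp f 2 volume) (hg : MemLp g 2 volume) :
    Integrable (fun x => inner ℝ (f x) (g x)) volume := by
  have h := hf.norm.integrable_mul hg.norm
  refine h.mono (hf.1.inner hg.1) (Eventually.of_forall fun x => ?_)
  refine (norm_inner_le_norm _ _).trans ?_
  simp

lemma cpt_ball {n : ℕ} {G : Type*} [NormedAddCommGroup G] {g : Euc n → G}
    (hc : HasCompactSupport g) : ∃ R : ℝ, ∀ x, x ∉ ball (0 : Euc n) R → g x = 0 := by
  obtain ⟨R, hR⟩ := hc.isCompact.isBounded.subset_ball 0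
  exact ⟨R, fun x hx => image_eq_zero_of_notMem_tsupport fun h => hx (hR h)⟩

lemma L2loc.smul_cpt {n : ℕ} {V : Euc n → Euc n} (hV : L2loc V) {g : Euc n → ℝ}
    (hg : Continuous g) (hc : HasCompactSupport g) : MemLp (fun x => g x • V x) 2 volume := by
  obtain ⟨R, hR⟩ := cpt_ball hc
  obtain ⟨B, hB⟩ := hc.exists_bound_of_continuous hg
  have h2 : MemLp ((ball (0 : Euc n) R).indicator V) 2 volume := by
    rw [memLp_indicator_iff_restrict measurableSet_ball]
    refine ⟨hV.1.restrict, ?_⟩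
    rw [eLpNorm_lt_top_iff_lintegral_rpow_enorm_lt_top (by norm_num) (by norm_num)]
    simpa using hV.2 R
  refine h2.of_le_mul (c := B) (hg.aestronglyMeasurable.smul hV.1) (Eventually.of_forall fun x => ?_)
  by_cases hx : x ∈ ball (0 : Euc n) R
  · rw [indicator_of_mem hx, norm_smul]
    gcongr; exact hB x
  · rw [hR x hx, indicator_of_notMem hx]; simp

lemma moll_cont {n : ℕ} {G : Type*} [NormedAddCommGroup G] [NormedSpace ℝ G] (j : ℕ) {V : Euc n → G}
    (hV : LocallyIntegrable V volume) : Continuous (moll j V) :=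
  (rhoK_cpt n j).continuous_convolution_left _ (rhoK_contDiff n j).continuous hV

lemma sq_tendsto {e s : ℕ → ℝ≥0∞} {c : ℝ≥0∞} (hc : c ≠ ⊤) (h : ∀ j, e j ^ 2 ≤ c * s j)
    (hs : Tendsto s atTop (𝓝 0)) : Tendsto e atTop (𝓝 0) := by
  have h1 : Tendsto (fun j => c * s j) atTop (𝓝 0) := by
    have := ENNReal.Tendsto.const_mul hs (Or.inr hc)
    rwa [mul_zero] at this
  have h2 : Tendsto (fun j => e j ^ 2) atTop (𝓝 0) :=
    tendsto_of_tendsto_of_tendsto_of_le_of_le tendsto_const_nhds h1 (fun _ => zero_le) h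
  have h3 := (ENNReal.continuous_rpow_const (y := 1 / 2)).tendsto 0 |>.comp h2
  rw [ENNReal.zero_rpow_of_pos (by norm_num)] at h3
  refine h3.congr fun j => ?_
  simp only [Function.comp_apply]
  rw [← ENNReal.rpow_natCast, ← ENNReal.rpow_mul]
  norm_num

lemma cpt_smul_r {n : ℕ} {f : Euc n → ℝ} {g : Euc n → Euc n} (h : HasCompactSupport f) :
    HasCompactSupport (fun x => f x • g x) :=
  h.mono fun x hx => by
    rw [Function.mem_support] at hx ⊢
    intro h0
    exact hx (by rw [h0, zero_smul])

lemma cpt_smul_l {n : ℕ} {f : Euc n → ℝ} {g : Euc n → Euc n} (h : HasCompactSupport g) :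
    HasCompactSupport (fun x => f x • g x) :=
  h.mono fun x hx => by
    rw [Function.mem_support] at hx ⊢
    intro h0
    exact hx (by rw [h0, smul_zero])

lemma KL {n : ℕ} {Γ : Set (Euc n)} (hcl : IsClosed Γ) {u : Euc n → ℝ} {V : Euc n → Euc n}
    (hu : LocallyIntegrable u volume) (hV : L2loc V) (hWG : WG Γᶜ u V) {F F' : ℝ → ℝ}
    (hF' : ∀ t, HasDerivAt F (F' t) t) (hF'c : Continuous F') {M : ℝ}
    (hFb : ∀ t, |F t| ≤ M) (hF'b : ∀ t, |F' t| ≤ M) {χ : Euc n → ℝ}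
    (hχ : ContDiff ℝ (⊤ : ℕ∞) χ) (hχc : HasCompactSupport χ) (hχs : tsupport χ ⊆ Γᶜ)
    {G : Euc n → Euc n} (hG : MemLp G 2 volume) :
    Tendsto (fun j => ∫ x, inner ℝ (G x) (gradient (fun y => F (moll j u y) * χ y) x)) atTop
      (𝓝 (∫ x, inner ℝ (G x) (F (u x) • gradient χ x + (χ x * F' (u x)) • V x))) := by
  have hM : 0 ≤ M := (abs_nonneg _).trans (hFb 0)
  have hFc : Continuous F := continuous_iff_continuousAt.2 fun t => (hF' t).continuousAt
  have hgχ := grad_cont hχ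
  have hgχc := grad_cpt hχc
  have hucont : ∀ j, Continuous (moll j u) := fun j => moll_cont j hu
  -- pieces
  set a : ℕ → Euc n → ℝ := fun j x =>
    inner ℝ (G x) (F (moll j u x) • gradient χ x) + inner ℝ (G x) ((χ x * F' (moll j u x)) • V x) with ha
  set b : ℕ → Euc n → ℝ := fun j x =>
    inner ℝ (G x) ((χ x * F' (moll j u x)) • moll j V x) -
      inner ℝ (G x) ((χ x * F' (moll j u x)) • V x) with hb
  have i1 : ∀ j, Integrable (fun x => inner ℝ (G x) (F (moll j u x) • gradient χ x)) volume := by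
    intro j
    have q1 : Continuous (fun x => F (moll j u x) • gradient χ x) := (hFc.comp (hucont j)).smul hgχ
    have q2 : HasCompactSupport (fun x => F (moll j u x) • gradient χ x) :=
      cpt_smul_l hgχc
    exact inner_int hG (q1.memLp_of_hasCompactSupport q2)
  have cc : ∀ j, Continuous (fun x => χ x * F' (moll j u x)) := fun j =>
    hχ.continuous.mul (hF'c.comp (hucont j))
  have cs : ∀ j, HasCompactSupport (fun x => χ x * F' (moll j u x)) := fun j => hχc.mul_right
  have i2 : ∀ j, Integrable (fun x => inner ℝ (G x) ((χ x * F' (moll j u x)) • V x)) volume := by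
    intro j
    exact inner_int hG (hV.smul_cpt (cc j) (cs j))
  have i3 : ∀ j, Integrable (fun x => inner ℝ (G x) ((χ x * F' (moll j u x)) • moll j V x)) volume := by
    intro j
    have q1 : Continuous (fun x => (χ x * F' (moll j u x)) • moll j V x) :=
      (cc j).smul (moll_cont j hV.locInt)
    have q2 : HasCompactSupport (fun x => (χ x * F' (moll j u x)) • moll j V x) :=
      cpt_smul_r (cs j)
    exact inner_int hG (q1.memLp_of_hasCompactSupport q2)
  have hgrad : ∀ᶠ j : ℕ in atTop, ∀ x, inner ℝ (G x) (gradient (fun y => F (moll j u y) * χ y) x) =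
      a j x + b j x := by
    obtain ⟨ε, hε, hεs⟩ := hχc.isCompact.exists_cthickening_subset_open hcl.isOpen_compl hχs
    have t1 : Tendsto (fun k : ℕ => 1 / ((k : ℝ) + 1)) atTop (𝓝 0) :=
      tendsto_one_div_add_atTop_nhds_zero_nat
    filter_upwards [t1.eventually_le_const hε] with j hj x
    have h1 : HasGradientAt χ (gradient χ x) x := (hχ.differentiable (by simp) x).hasGradientAt
    have h2 : HasGradientAt (moll j u) (gradient (moll j u) x) x :=
      ((moll_contDiff j hu).differentiable (by simp) x).hasGradientAt
    have h3 : HasGradientAt (fun y => F (moll j u y)) (F' (moll j u x) • gradient (moll j u) x) x := by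
      have h := (hF' (moll j u x)).comp_hasFDerivAt x h2.hasFDerivAt
      refine hasGrad_of h ?_
      intro y
      simp [inner_smul_left]
    rw [(grad_mul h3 h1).gradient]
    by_cases hx : x ∈ tsupport χ
    · have hg : gradient (moll j u) x = moll j V x := by
        apply HasGradientAt.gradient
        apply moll_grad j hu hWG
        refine subset_trans ?_ hεs
        refine (closedBall_subset_closedBall hj).trans (closedBall_subset_cthickening hx ε)
      rw [hg, ha, hb]
      simp only [inner_add_right, smul_smul]
      ring
    · have hz : χ x = 0 := image_eq_zero_of_notMem_tsupport hx
      rw [ha, hb]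
      simp [hz]
  -- a converges
  have Ta : Tendsto (fun j => ∫ x, a j x) atTop
      (𝓝 (∫ x, inner ℝ (G x) (F (u x) • gradient χ x + (χ x * F' (u x)) • V x))) := by
    have k1 : Integrable (fun x => inner ℝ (G x) (gradient χ x)) volume :=
      inner_int hG (hgχ.memLp_of_hasCompactSupport hgχc)
    have k2 : Integrable (fun x => inner ℝ (G x) (χ x • V x)) volume :=
      inner_int hG (hV.smul_cpt hχ.continuous hχc)
    apply tendsto_integral_of_dominated_convergence
      (fun x => M * ‖inner ℝ (G x) (gradient χ x)‖ + M * ‖inner ℝ (G x) (χ x • V x)‖)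
    · intro j
      exact ((i1 j).add (i2 j)).aestronglyMeasurable
    · exact (k1.norm.const_mul M).add (k2.norm.const_mul M)
    · intro j
      refine Eventually.of_forall fun x => ?_
      rw [ha]
      refine (norm_add_le _ _).trans ?_
      gcongr
      · rw [inner_smul_right, norm_mul]
        gcongr
        exact hFb _
      · rw [mul_comm (χ x), ← smul_smul, inner_smul_right, norm_mul]
        gcongr
        exact hF'b _
    · filter_upwards [moll_ae hu] with x hx
      rw [ha]
      simp only [inner_add_right, inner_smul_right]
      have e1 := (hFc.tendsto _).comp hx
      have e2 := (hF'c.tendsto _).comp hx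
      exact (e1.mul_const _).add ((e2.const_mul _).mul_const _)
  -- b goes to zero
  have Tb : Tendsto (fun j => ∫ x, b j x) atTop (𝓝 0) := by
    obtain ⟨R, hR⟩ := cpt_ball hχc
    obtain ⟨B, hB⟩ := hχc.exists_bound_of_continuous hχ.continuous
    have hB0 : 0 ≤ B := (norm_nonneg _).trans (hB 0)
    rw [tendsto_iff_norm_sub_tendsto_zero]
    simp only [sub_zero]
    have key : Tendsto (fun j => ∫⁻ x, ‖b j x‖ₑ) atTop (𝓝 0) := by
      have hGt : ∫⁻ x, ‖G x‖ₑ ^ 2 < ⊤ := by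
        have := hG.2
        rw [eLpNorm_lt_top_iff_lintegral_rpow_enorm_lt_top (by norm_num) (by norm_num)] at this
        simpa using this
      refine sq_tendsto (c := ENNReal.ofReal (B * M) ^ 2 * ∫⁻ x, ‖G x‖ₑ ^ 2)
        (ENNReal.mul_ne_top (by simp) hGt.ne) ?_ (moll_L2loc hV R)
      intro j
      have h1 : ∫⁻ x, ‖b j x‖ₑ ≤
          ENNReal.ofReal (B * M) * ∫⁻ x in ball 0 R, ‖G x‖ₑ * ‖moll j V x - V x‖ₑ := by
        rw [← lintegral_const_mul' _ _ ENNReal.ofReal_ne_top, ← lintegral_indicator measurableSet_ball]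
        apply lintegral_mono
        intro x
        beta_reduce
        by_cases hx : x ∈ ball (0 : Euc n) R
        · rw [indicator_of_mem hx, hb]
          beta_reduce
          rw [← inner_sub_right, ← smul_sub, inner_smul_right, enorm_mul]
          gcongr
          · rw [← ofReal_norm]
            apply ENNReal.ofReal_le_ofReal
            rw [norm_mul]
            gcongr
            · exact hB x
            · exact hF'b _
          · rw [← ofReal_norm, ← ofReal_norm, ← ofReal_norm, ← ENNReal.ofReal_mul (norm_nonneg _)]
            exact ENNReal.ofReal_le_ofReal (norm_inner_le_norm _ _)
        · rw [hb]; simp [hR x hx]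
      calc (∫⁻ x, ‖b j x‖ₑ) ^ 2 ≤ (ENNReal.ofReal (B * M) *
            ∫⁻ x in ball 0 R, ‖G x‖ₑ * ‖moll j V x - V x‖ₑ) ^ 2 := by gcongr
        _ = ENNReal.ofReal (B * M) ^ 2 * (∫⁻ x in ball 0 R, ‖G x‖ₑ * ‖moll j V x - V x‖ₑ) ^ 2 :=
            mul_pow _ _ _
        _ ≤ ENNReal.ofReal (B * M) ^ 2 * ((∫⁻ x, ‖G x‖ₑ ^ 2) *
            ∫⁻ x in ball 0 R, ‖moll j V x - V x‖ₑ ^ 2) := by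
          gcongr
          refine (cs_lint hG.1.restrict.enorm ?_).trans ?_
          · exact ((moll_cont j hV.locInt).aestronglyMeasurable.sub hV.1).restrict.enorm
          · gcongr
            exact Measure.restrict_le_self
        _ = _ := by rw [mul_assoc]
    have key2 := (ENNReal.continuousAt_toReal ENNReal.zero_ne_top).tendsto.comp key
    rw [ENNReal.toReal_zero] at key2
    refine squeeze_zero (fun _ => norm_nonneg _) (fun j => ?_) key2
    simp only [Function.comp_apply]
    have := norm_integral_le_lintegral_norm (fun x => b j x) (μ := volume)
    simpa only [ofReal_norm] using this
  have T := Ta.add Tb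
  rw [add_zero] at T
  refine T.congr' ?_
  filter_upwards [hgrad] with j hj
  rw [← integral_add]
  · exact integral_congr_ae (Eventually.of_forall fun x => (hj x).symm)
  · exact (i1 j).add (i2 j)
  · exact (i3 j).sub (i2 j)

lemma int_grad_zero {n : ℕ} {ψ : Euc n → ℝ} (hψ : ContDiff ℝ (⊤ : ℕ∞) ψ) (hc : HasCompactSupport ψ)
    (e : Euc n) : ∫ x, inner ℝ e (gradient ψ x) = 0 := by
  have hd : Integrable (fun x => fderiv ℝ ψ x e) volume := by
    apply Continuous.integrable_of_hasCompactSupport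
    · exact (hψ.continuous_fderiv (by simp)).clm_apply continuous_const
    · exact (hc.fderiv ℝ).comp_left (g := fun L : Euc n →L[ℝ] ℝ => L e) (by simp)
  have h := integral_mul_fderiv_eq_neg_fderiv_mul_of_integrable (𝕜 := ℝ) (μ := (volume : Measure (Euc n)))
    (f := fun _ => (1 : ℝ)) (g := ψ) (v := e) (by simp) (by simpa using hd)
    (by simpa using hψ.continuous.integrable_of_hasCompactSupport hc)
    (fun x _ => differentiableAt_const _) (fun x _ => hψ.differentiable (by simp) x)
  simp at h
  rw [← h]
  congr 1; ext x
  rw [real_inner_comm]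
  show inner ℝ ((InnerProductSpace.toDual ℝ (Euc n)).symm (fderiv ℝ ψ x)) e = _
  rw [InnerProductSpace.toDual_symm_apply]

lemma chain_loc {n : ℕ} {Γ : Set (Euc n)} (hcl : IsClosed Γ) {u : Euc n → ℝ} {V : Euc n → Euc n}
    (hu : LocallyIntegrable u volume) (hV : L2loc V) (hWG : WG Γᶜ u V) {F F' : ℝ → ℝ}
    (hF : ContDiff ℝ (⊤ : ℕ∞) F)
    (hF' : ∀ t, HasDerivAt F (F' t) t) (hF'c : Continuous F') {M : ℝ}
    (hFb : ∀ t, |F t| ≤ M) (hF'b : ∀ t, |F' t| ≤ M) {χ : Euc n → ℝ}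
    (hχ : ContDiff ℝ (⊤ : ℕ∞) χ) (hχc : HasCompactSupport χ) (hχs : tsupport χ ⊆ Γᶜ) (e : Euc n) :
    ∫ x, inner ℝ e (F (u x) • gradient χ x + (χ x * F' (u x)) • V x) = 0 := by
  obtain ⟨R, hR⟩ := hχc.isCompact.isBounded.subset_ball 0
  have hz : ∀ x, x ∉ ball (0 : Euc n) R → χ x = 0 ∧ gradient χ x = 0 := by
    intro x hx
    have h1 : x ∉ tsupport χ := fun h => hx (hR h)
    refine ⟨image_eq_zero_of_notMem_tsupport h1, ?_⟩
    rw [← norm_eq_zero, norm_grad, norm_eq_zero]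
    exact fderiv_of_notMem_tsupport ℝ h1
  have hG : MemLp ((ball (0 : Euc n) R).indicator fun _ => e) 2 volume :=
    memLp_indicator_const 2 measurableSet_ball e (Or.inr measure_ball_lt_top.ne)
  have T := KL hcl hu hV hWG hF' hF'c hFb hF'b hχ hχc hχs hG
  have e1 : ∀ j, ∫ x, inner ℝ ((ball (0 : Euc n) R).indicator (fun _ => e) x)
      (gradient (fun y => F (moll j u y) * χ y) x) = 0 := by
    intro j
    have hs : ContDiff ℝ (⊤ : ℕ∞) (fun y => F (moll j u y) * χ y) :=
      (hF.comp (moll_contDiff j hu)).mul hχ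
    have hc : HasCompactSupport (fun y => F (moll j u y) * χ y) := hχc.mul_left
    rw [← int_grad_zero hs hc e]
    congr 1; ext x
    by_cases hx : x ∈ ball (0 : Euc n) R
    · rw [indicator_of_mem hx]
    · have h1 : x ∉ tsupport (fun y => F (moll j u y) * χ y) := fun h =>
        hx (hR (tsupport_mul_subset_right h))
      have : gradient (fun y => F (moll j u y) * χ y) x = 0 := by
        rw [← norm_eq_zero, norm_grad, norm_eq_zero]
        exact fderiv_of_notMem_tsupport ℝ h1
      rw [this]; simp
  simp_rw [e1] at T
  rw [tendsto_nhds_unique tendsto_const_nhds T]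
  congr 1; ext x
  by_cases hx : x ∈ ball (0 : Euc n) R
  · rw [indicator_of_mem hx]
  · rw [(hz x hx).1, (hz x hx).2]; simp

lemma cpt_bdd_int {n : ℕ} {g : Euc n → ℝ} (hg : Continuous g) (hc : HasCompactSupport g)
    {h : Euc n → ℝ} (hm : AEStronglyMeasurable h volume)
    (hh : ∀ R : ℝ, ∫⁻ x in ball 0 R, ‖h x‖ₑ < ⊤) : Integrable (fun x => g x * h x) volume := by
  obtain ⟨R, hR⟩ := cpt_ball hc
  obtain ⟨B, hB⟩ := hc.exists_bound_of_continuous hg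
  have hi : Integrable ((ball (0 : Euc n) R).indicator h) volume := by
    rw [integrable_indicator_iff measurableSet_ball]
    exact ⟨hm.restrict, hh R⟩
  refine (hi.norm.const_mul B).mono (hg.aestronglyMeasurable.mul hm) (Eventually.of_forall fun x => ?_)
  have hB0 : 0 ≤ B := (norm_nonneg _).trans (hB x)
  by_cases hx : x ∈ ball (0 : Euc n) R
  · rw [indicator_of_mem hx, norm_mul, norm_mul, norm_norm, Real.norm_of_nonneg hB0]
    gcongr; exact hB x
  · rw [hR x hx, indicator_of_notMem hx]; simp

lemma chain_global {n : ℕ} {Γ : Set (Euc n)} (hne : Γ.Nonempty) (hcl : IsClosed Γ)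
    (hvol : volume Γ = 0)
    (hδ : ∀ R : ℝ, ∫⁻ z in ball (0 : Euc n) R, ENNReal.ofReal ((infDist z Γ)⁻¹) < ⊤)
    {u : Euc n → ℝ} {V : Euc n → Euc n}
    (hu : LocallyIntegrable u volume) (hV : L2loc V) (hWG : WG Γᶜ u V) {F F' : ℝ → ℝ}
    (hF : ContDiff ℝ (⊤ : ℕ∞) F)
    (hF' : ∀ t, HasDerivAt F (F' t) t) (hF'c : Continuous F') {M : ℝ}
    (hFb : ∀ t, |F t| ≤ M) (hF'b : ∀ t, |F' t| ≤ M) :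
    WG univ (fun x => F (u x)) (fun x => F' (u x) • V x) := by
  intro φ hφ hφc _
  have hM : 0 ≤ M := (abs_nonneg _).trans (hFb 0)
  have hgφ := grad_cont hφ
  have hgφc := grad_cpt hφc
  have hum := hu.aestronglyMeasurable
  have hFu : AEStronglyMeasurable (fun x => F (u x)) volume :=
    hF.continuous.comp_aestronglyMeasurable hum
  have hF'u : AEStronglyMeasurable (fun x => F' (u x)) volume :=
    hF'c.comp_aestronglyMeasurable hum
  have hgi : Integrable (gradient φ) volume := hgφ.integrable_of_hasCompactSupport hgφc
  have hφV : Integrable (fun x => φ x • V x) volume :=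
    hV.locInt.integrable_smul_left_of_hasCompactSupport hφ.continuous hφc
  have j1 : Integrable (fun x => F (u x) • gradient φ x) volume := by
    refine (hgi.norm.const_mul M).mono (hFu.smul hgi.1) (Eventually.of_forall fun x => ?_)
    rw [norm_smul, norm_mul, norm_norm, Real.norm_of_nonneg hM]
    gcongr; exact hFb _
  have j2 : Integrable (fun x => φ x • F' (u x) • V x) volume := by
    refine (hφV.norm.const_mul M).mono (hφ.continuous.aestronglyMeasurable.smul (hF'u.smul hV.1))
      (Eventually.of_forall fun x => ?_)
    rw [smul_comm, norm_smul, norm_mul, norm_norm, Real.norm_of_nonneg hM]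
    gcongr; exact hF'b _
  rw [eq_neg_iff_add_eq_zero, ← integral_add j1 j2]
  refine integral_eq_zero_of_forall_integral_inner_eq_zero ℝ _ (j1.add j2) fun e => ?_
  obtain ⟨η, C, hC, hη1, hη2, hη3⟩ := cutoffs hne hcl
  have hae : ∀ᵐ x ∂(volume : Measure (Euc n)), x ∉ Γ := by
    rw [ae_iff]; simpa using hvol
  have hk : ∀ k, ∫ x, inner ℝ e (F (u x) • (η k x • gradient φ x + φ x • gradient (η k) x)
      + (η k x * φ x * F' (u x)) • V x) = 0 := by
    intro k
    obtain ⟨a1, a2, a3, a4⟩ := hη1 k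
    have hs : ContDiff ℝ (⊤ : ℕ∞) (fun x => η k x * φ x) := a1.mul hφ
    have hc : HasCompactSupport (fun x => η k x * φ x) := a2.mul_right
    have ht : tsupport (fun x => η k x * φ x) ⊆ Γᶜ := tsupport_mul_subset_left.trans a3
    have h := chain_loc hcl hu hV hWG hF hF' hF'c hFb hF'b hs hc ht e
    rw [← h]
    congr 1; ext x
    have h1 : HasGradientAt φ (gradient φ x) x := (hφ.differentiable (by simp) x).hasGradientAt
    have h2 : HasGradientAt (η k) (gradient (η k) x) x := (a1.differentiable (by simp) x).hasGradientAt
    rw [(grad_mul h2 h1).gradient]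
  have T : Tendsto (fun k => ∫ x, inner ℝ e (F (u x) • (η k x • gradient φ x + φ x • gradient (η k) x)
      + (η k x * φ x * F' (u x)) • V x)) atTop
      (𝓝 (∫ x, inner ℝ e (F (u x) • gradient φ x + φ x • F' (u x) • V x))) := by
    have hφδ : Integrable (fun x => φ x * (infDist x Γ)⁻¹) volume := by
      apply cpt_bdd_int hφ.continuous hφc
      · exact (measurable_infDist.inv).aestronglyMeasurable
      · intro R
        refine lt_of_eq_of_lt ?_ (hδ R)
        congr 1; ext x
        rw [Real.enorm_of_nonneg (inv_nonneg.2 infDist_nonneg)]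
    apply tendsto_integral_of_dominated_convergence
      (fun x => ‖e‖ * (M * ‖gradient φ x‖ + M * C * ‖φ x * (infDist x Γ)⁻¹‖ + M * ‖φ x • V x‖))
    · intro k
      obtain ⟨a1, a2, a3, a4⟩ := hη1 k
      apply AEStronglyMeasurable.inner aestronglyMeasurable_const
      apply AEStronglyMeasurable.add
      · apply hFu.smul
        exact ((a1.continuous.smul hgφ).add (hφ.continuous.smul (grad_cont a1))).aestronglyMeasurable
      · exact ((a1.continuous.mul hφ.continuous).aestronglyMeasurable.mul hF'u).smul hV.1
    · exact (((hgi.norm.const_mul M).add (hφδ.norm.const_mul (M * C))).add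
        (hφV.norm.const_mul M)).const_mul _
    · intro k
      obtain ⟨a1, a2, a3, a4⟩ := hη1 k
      filter_upwards [hae] with x hx
      refine (norm_inner_le_norm _ _).trans ?_
      gcongr
      refine (norm_add_le _ _).trans ?_
      have hη' : ‖η k x‖ ≤ 1 := by rw [Real.norm_of_nonneg (a4 x).1]; exact (a4 x).2
      apply add_le_add
      · rw [norm_smul]
        have q1 : ‖η k x • gradient φ x + φ x • gradient (η k) x‖ ≤
            ‖gradient φ x‖ + C * ‖φ x * (infDist x Γ)⁻¹‖ := by
          refine (norm_add_le _ _).trans ?_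
          rw [norm_smul, norm_smul, norm_mul, Real.norm_of_nonneg (inv_nonneg.2 infDist_nonneg)]
          have q2 := hη2 k x hx
          have q3 : ‖η k x‖ * ‖gradient φ x‖ ≤ 1 * ‖gradient φ x‖ := by gcongr
          have q4 : ‖φ x‖ * ‖gradient (η k) x‖ ≤ ‖φ x‖ * (C * (infDist x Γ)⁻¹) := by gcongr
          linarith
        calc ‖F (u x)‖ * _ ≤ M * (‖gradient φ x‖ + C * ‖φ x * (infDist x Γ)⁻¹‖) := by
              gcongr; exact hFb _
          _ = _ := by ring
      · rw [show (η k x * φ x * F' (u x)) • V x = (F' (u x) * η k x) • φ x • V x by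
          rw [smul_smul]; ring_nf]
        rw [norm_smul, norm_mul]
        have : ‖F' (u x)‖ * ‖η k x‖ ≤ M * 1 := by gcongr; exact hF'b _
        rw [mul_one] at this
        gcongr
    · filter_upwards [hae] with x hx
      apply tendsto_const_nhds.congr'
      filter_upwards [hη3 x hx] with k hk
      rw [hk.1, hk.2]
      simp [smul_smul]
  simp_rw [hk] at T
  exact (tendsto_nhds_unique tendsto_const_nhds T).symm

def FR (ε t : ℝ) : ℝ := t / (1 + ε * t ^ 2)
def FR' (ε t : ℝ) : ℝ := (1 - ε * t ^ 2) / (1 + ε * t ^ 2) ^ 2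

lemma FR_pos {ε : ℝ} (hε : 0 < ε) (t : ℝ) : 0 < 1 + ε * t ^ 2 := by positivity

lemma FR_smooth {ε : ℝ} (hε : 0 < ε) : ContDiff ℝ (⊤ : ℕ∞) (FR ε) := by
  unfold FR
  apply ContDiff.div contDiff_id (by fun_prop)
  intro t; exact (FR_pos hε t).ne'

lemma FR_deriv {ε : ℝ} (hε : 0 < ε) (t : ℝ) : HasDerivAt (FR ε) (FR' ε t) t := by
  have h1 : HasDerivAt (fun t : ℝ => 1 + ε * t ^ 2) (ε * (2 * t)) t := by
    have := ((hasDerivAt_pow 2 t).const_mul ε).const_add 1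
    simpa using this
  have h := (hasDerivAt_id t).div h1 (FR_pos hε t).ne'
  refine h.congr_deriv ?_
  unfold FR'
  simp only [id]
  congr 1; ring

lemma FR'_cont {ε : ℝ} (hε : 0 < ε) : Continuous (FR' ε) := by
  unfold FR'
  apply Continuous.div (by fun_prop) (by fun_prop)
  intro t; exact (pow_pos (FR_pos hε t) 2).ne'

lemma FR_le {ε : ℝ} (hε : 0 < ε) (t : ℝ) : |FR ε t| ≤ |t| := by
  unfold FR
  rw [abs_div, abs_of_pos (FR_pos hε t)]
  apply div_le_self (abs_nonneg _)
  nlinarith [mul_nonneg hε.le (sq_nonneg t)]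

lemma FR_le2 {ε : ℝ} (hε : 0 < ε) (hε1 : ε ≤ 1) (t : ℝ) : |FR ε t| ≤ 1 / ε := by
  unfold FR
  rw [abs_div, abs_of_pos (FR_pos hε t), div_le_div_iff₀ (FR_pos hε t) hε, one_mul]
  have : |t| ≤ 1 + t ^ 2 := by
    rw [← sq_abs]; nlinarith [sq_nonneg (|t| - 1)]
  nlinarith

lemma FR'_le {ε : ℝ} (hε : 0 < ε) (t : ℝ) : |FR' ε t| ≤ 1 := by
  unfold FR'
  have h0 := mul_nonneg hε.le (sq_nonneg t)
  rw [abs_div, abs_of_pos (pow_pos (FR_pos hε t) 2), div_le_one (pow_pos (FR_pos hε t) 2), abs_le]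
  constructor <;> nlinarith

lemma WG_univ {n : ℕ} {Γ : Set (Euc n)} (hne : Γ.Nonempty) (hcl : IsClosed Γ)
    (hvol : volume Γ = 0)
    (hδ : ∀ R : ℝ, ∫⁻ z in ball (0 : Euc n) R, ENNReal.ofReal ((infDist z Γ)⁻¹) < ⊤)
    {u : Euc n → ℝ} {V : Euc n → Euc n}
    (hu : LocallyIntegrable u volume) (hV : L2loc V) (hWG : WG Γᶜ u V) : WG univ u V := by
  intro φ hφ hφc hφs
  set ε : ℕ → ℝ := fun k => 1 / ((k : ℝ) + 1) with hεd
  have hε : ∀ k, 0 < ε k := fun k => by rw [hεd]; positivity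
  have hε1 : ∀ k, ε k ≤ 1 := fun k => by
    rw [hεd]; beta_reduce
    rw [div_le_one (by positivity)]
    linarith [(Nat.cast_nonneg k : (0:ℝ) ≤ k)]
  have hεt : Tendsto ε atTop (𝓝 0) := tendsto_one_div_add_atTop_nhds_zero_nat
  have hk := fun k => chain_global hne hcl hvol hδ hu hV hWG (FR_smooth (hε k)) (FR_deriv (hε k))
    (FR'_cont (hε k)) (M := 1 / ε k) (FR_le2 (hε k) (hε1 k))
    (fun t => (FR'_le (hε k) t).trans (by rw [le_div_iff₀ (hε k)]; linarith [hε1 k])) φ hφ hφc hφs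
  have hum := hu.aestronglyMeasurable
  have hgφ := grad_cont hφ
  have hgφc := grad_cpt hφc
  have hi1 : Integrable (fun x => u x • gradient φ x) volume :=
    hu.integrable_smul_right_of_hasCompactSupport hgφ hgφc
  have hi2 : Integrable (fun x => φ x • V x) volume :=
    hV.locInt.integrable_smul_left_of_hasCompactSupport hφ.continuous hφc
  have T1 : Tendsto (fun k => ∫ x, FR (ε k) (u x) • gradient φ x) atTop
      (𝓝 (∫ x, u x • gradient φ x)) := by
    apply tendsto_integral_of_dominated_convergence (fun x => ‖u x • gradient φ x‖)
    · intro k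
      exact ((FR_smooth (hε k)).continuous.comp_aestronglyMeasurable hum).smul
        hgφ.aestronglyMeasurable
    · exact hi1.norm
    · intro k
      refine Eventually.of_forall fun x => ?_
      rw [norm_smul, norm_smul]
      gcongr
      exact FR_le (hε k) _
    · refine Eventually.of_forall fun x => ?_
      refine Tendsto.smul_const ?_ _
      have : Tendsto (fun k => u x / (1 + ε k * u x ^ 2)) atTop (𝓝 (u x / (1 + 0 * u x ^ 2))) :=
        tendsto_const_nhds.div (tendsto_const_nhds.add (hεt.mul_const _)) (by simp)
      simpa [FR] using this
  have T2 : Tendsto (fun k => ∫ x, φ x • FR' (ε k) (u x) • V x) atTop (𝓝 (∫ x, φ x • V x)) := by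
    apply tendsto_integral_of_dominated_convergence (fun x => ‖φ x • V x‖)
    · intro k
      exact hφ.continuous.aestronglyMeasurable.smul
        (((FR'_cont (hε k)).comp_aestronglyMeasurable hum).smul hV.1)
    · exact hi2.norm
    · intro k
      refine Eventually.of_forall fun x => ?_
      rw [smul_comm, norm_smul]
      refine mul_le_of_le_one_left (norm_nonneg _) (FR'_le (hε k) _)
    · refine Eventually.of_forall fun x => ?_
      refine Tendsto.const_smul ?_ _
      have : Tendsto (fun k => (1 - ε k * u x ^ 2) / (1 + ε k * u x ^ 2) ^ 2) atTop
          (𝓝 ((1 - 0 * u x ^ 2) / (1 + 0 * u x ^ 2) ^ 2)) :=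
        (tendsto_const_nhds.sub (hεt.mul_const _)).div
          ((tendsto_const_nhds.add (hεt.mul_const _)).pow 2) (by simp)
      have h2 := this.smul_const (V x)
      simpa [FR'] using h2
  exact tendsto_nhds_unique (T1.congr hk) T2.neg

lemma WG_of_MemW {n : ℕ} {d : ℝ} {Γ : Set (Euc n)} {u : Euc n → ℝ} {v : Euc n → Euc n}
    (hW : MemW n d Γ u v) : WG Γᶜ u (Γᶜ.indicator v) := by
  intro φ hφ hφc hφs
  have h := hW.isGrad φ hφ hφc hφs
  rw [setIntegral_eq_integral_of_forall_compl_eq_zero, setIntegral_eq_integral_of_forall_compl_eq_zero] at h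
  · rw [h]
    congr 2; ext1 x
    by_cases hx : x ∈ Γᶜ
    · rw [indicator_of_mem hx]
    · rw [image_eq_zero_of_notMem_tsupport fun hh => hx (hφs hh), zero_smul, zero_smul]
  · intro x hx
    rw [image_eq_zero_of_notMem_tsupport fun hh => hx (hφs hh), zero_smul]
  · intro x hx
    have : gradient φ x = 0 := by
      rw [← norm_eq_zero, norm_grad, norm_eq_zero]
      exact fderiv_of_notMem_tsupport ℝ fun hh => hx (hφs hh)
    rw [this, smul_zero]

def FT (t : ℝ) : ℝ := Real.smoothTransition (-t)
def FT' (t : ℝ) : ℝ := - deriv Real.smoothTransition (-t)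

lemma FT_smooth : ContDiff ℝ (⊤ : ℕ∞) FT := Real.smoothTransition.contDiff.comp contDiff_neg

lemma FT_deriv (t : ℝ) : HasDerivAt FT (FT' t) t := by
  have h1 : HasDerivAt Real.smoothTransition (deriv Real.smoothTransition (-t)) (-t) :=
    ((Real.smoothTransition.contDiff (n := 1)).differentiable (by simp) (-t)).hasDerivAt
  have h2 : HasDerivAt (fun t : ℝ => -t) (-1) t := hasDerivAt_neg t
  have h := h1.comp t h2
  refine h.congr_deriv ?_
  unfold FT'; ring

lemma FT'_cont : Continuous FT' := by
  have h : Continuous (deriv Real.smoothTransition) :=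
    (Real.smoothTransition.contDiff (n := 1)).continuous_deriv (by simp)
  exact (h.comp continuous_neg).neg

lemma FT_nonneg (t : ℝ) : 0 ≤ FT t := Real.smoothTransition.nonneg _
lemma FT_le_one (t : ℝ) : FT t ≤ 1 := Real.smoothTransition.le_one _
lemma FT_zero {t : ℝ} (ht : 0 ≤ t) : FT t = 0 := Real.smoothTransition.zero_of_nonpos (by linarith)
lemma FT_pos {t : ℝ} (ht : t < 0) : 0 < FT t := Real.smoothTransition.pos_of_pos (by linarith)

lemma FT'_nonpos (t : ℝ) : FT' t ≤ 0 := by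
  unfold FT'
  have := Real.smoothTransition.monotone.deriv_nonneg (x := -t)
  linarith

lemma FT'_bdd : ∃ M : ℝ, 1 ≤ M ∧ (∀ t, |FT' t| ≤ M) ∧ ∀ t, |FT t| ≤ M := by
  have hc : HasCompactSupport (deriv Real.smoothTransition) := by
    apply HasCompactSupport.intro (isCompact_Icc (a := (0:ℝ)) (b := 1))
    intro x hx
    rw [mem_Icc, not_and_or, not_le, not_le] at hx
    rcases hx with hx | hx
    · have : Real.smoothTransition =ᶠ[𝓝 x] fun _ => 0 := by
        filter_upwards [isOpen_Iio.mem_nhds hx] with y hy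
        exact Real.smoothTransition.zero_of_nonpos (le_of_lt hy)
      rw [this.deriv_eq]; simp
    · have : Real.smoothTransition =ᶠ[𝓝 x] fun _ => 1 := by
        filter_upwards [isOpen_Ioi.mem_nhds hx] with y hy
        exact Real.smoothTransition.one_of_one_le (le_of_lt hy)
      rw [this.deriv_eq]; simp
  have h : Continuous (deriv Real.smoothTransition) :=
    (Real.smoothTransition.contDiff (n := 1)).continuous_deriv (by simp)
  obtain ⟨B, hB⟩ := hc.exists_bound_of_continuous h
  refine ⟨max 1 B, le_max_left _ _, fun t => ?_, fun t => ?_⟩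
  · unfold FT'
    rw [abs_neg]
    exact (hB _).trans (le_max_right _ _)
  · rw [abs_of_nonneg (FT_nonneg t)]
    exact (FT_le_one t).trans (le_max_left _ _)

lemma FT_lip {M : ℝ} (hM : ∀ t, |FT' t| ≤ M) {s t : ℝ} (ht : 0 ≤ t) : |FT s| ≤ M * |s - t| := by
  have hM0 : 0 ≤ M := (abs_nonneg _).trans (hM 0)
  have h := Convex.norm_image_sub_le_of_norm_hasDerivWithin_le (f := FT) (f' := FT') (C := M)
    (s := univ) (x := t) (y := s) (fun x _ => (FT_deriv x).hasDerivWithinAt) (fun x _ => hM x)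
    convex_univ trivial trivial
  rw [FT_zero ht, sub_zero] at h
  exact h

lemma hardy {n : ℕ} (hn : 2 ≤ n) {d C₀ : ℝ}
    (hdn : d < (n : ℝ) - 1) (hC₀ : 1 ≤ C₀)
    {Γ : Set (Euc n)} (hne : Γ.Nonempty) (hcl : IsClosed Γ)
    (hAR : AhlforsRegular n d C₀ Γ)
    {u : Euc n → ℝ} {v : Euc n → Euc n} (hW : MemW n d Γ u v)
    (hloc : LocallyIntegrable u volume) (hWG : WG univ u (Γᶜ.indicator v))
    (htrace : ∀ᵐ x ∂(μH[d].restrict Γ), ∃ t : ℝ, 0 ≤ t ∧ HasTraceAt u x t) :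
    ∫⁻ x in Γᶜ, ‖FT (u x)‖ₑ ^ 2 * ENNReal.ofReal (infDist x Γ ^ (d - ((n : ℝ) + 1))) < ⊤ := by
  have := sig_finite hne hAR
  obtain ⟨M, hM1, hM, -⟩ := FT'_bdd
  have hO := hcl.isOpen_compl.measurableSet
  have hV := V_L2loc hdn hne hcl hW
  set c : ℝ := C₀⁻¹ * 2 ^ (-((n : ℝ) + 1)) with hc
  have hc0 : 0 < c := by positivity
  have hum := hloc.aestronglyMeasurable
  have hFu : AEStronglyMeasurable (fun x => FT (u x)) volume :=
    FT_smooth.continuous.comp_aestronglyMeasurable hum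
  have hFe : AEMeasurable (fun x => ‖FT (u x)‖ₑ ^ 2) volume := hFu.enorm.pow_const 2
  have h1 : ENNReal.ofReal c * ∫⁻ x in Γᶜ, ‖FT (u x)‖ₑ ^ 2 *
      ENNReal.ofReal (infDist x Γ ^ (d - ((n : ℝ) + 1))) ≤
      ∫⁻ x, ∫⁻ y, ‖FT (u x)‖ₑ ^ 2 * kap ((n : ℝ) + 1) (x - y) ∂(μH[d].restrict Γ) := by
    rw [← lintegral_const_mul' _ _ ENNReal.ofReal_ne_top, ← lintegral_indicator hO]
    apply lintegral_mono
    intro x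
    beta_reduce
    by_cases hx : x ∈ Γᶜ
    swap
    · rw [indicator_of_notMem hx]; exact zero_le
    rw [indicator_of_mem hx, lintegral_const_mul' _ _ (by simp)]
    rw [mul_left_comm, ← ENNReal.ofReal_mul hc0.le]
    gcongr
    refine (pot_lower hC₀ hne hcl hAR (p := (n : ℝ) + 1) (by positivity) hx).trans ?_
    exact lintegral_mono' Measure.restrict_le_self le_rfl
  have h2 : ∫⁻ x, ∫⁻ y, ‖FT (u x)‖ₑ ^ 2 * kap ((n : ℝ) + 1) (x - y) ∂(μH[d].restrict Γ) < ⊤ := by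
    rw [lintegral_lintegral_swap]
    swap
    · have q1 : AEMeasurable (fun p : Euc n × Euc n => kap ((n : ℝ) + 1) (p.1 - p.2))
          ((volume : Measure (Euc n)).prod (μH[d].restrict Γ)) :=
        ((kap_meas _).comp (measurable_fst.sub measurable_snd)).aemeasurable
      have q2 := hFe.comp_quasiMeasurePreserving
        (Measure.quasiMeasurePreserving_fst (μ := volume) (ν := μH[d].restrict Γ))
      exact q2.mul q1
    have h3 : ∀ᵐ y ∂(μH[d].restrict Γ), ∫⁻ x, ‖FT (u x)‖ₑ ^ 2 * kap ((n : ℝ) + 1) (x - y) ≤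
        ENNReal.ofReal M ^ 2 * 16 * EE (Γᶜ.indicator v) y := by
      filter_upwards [htrace] with y hy
      obtain ⟨t, ht0, ht⟩ := hy
      have h4 := point_hardy (by omega) hloc hV hWG y ht
      rw [mul_assoc]
      refine le_trans ?_ (mul_le_mul_right h4 (ENNReal.ofReal M ^ 2))
      rw [← lintegral_const_mul' _ _ (by simp)]
      apply lintegral_mono
      intro x
      beta_reduce
      rw [← mul_assoc, ← mul_pow]
      gcongr
      rw [← ofReal_norm, ← ofReal_norm, ← ENNReal.ofReal_mul (by linarith)]
      exact ENNReal.ofReal_le_ofReal (FT_lip hM ht0)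
    refine (lintegral_mono_ae h3).trans_lt ?_
    rw [lintegral_const_mul' _ _ (ENNReal.mul_ne_top (by simp) (by simp))]
    exact ENNReal.mul_lt_top (ENNReal.mul_lt_top (by simp) (by simp))
      (EE_int hn hdn hC₀ hne hcl hAR hW)
  have h5 := h1.trans_lt h2
  by_contra hcon
  rw [not_lt, top_le_iff] at hcon
  rw [hcon, ENNReal.mul_top (by simpa using hc0)] at h5
  exact lt_irrefl _ h5

lemma euc_sum {n : ℕ} (a b : Euc n) : ∑ i, a i * b i = inner ℝ a b := by
  rw [PiLp.inner_apply]
  refine Finset.sum_congr rfl fun i _ => ?_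
  simp [mul_comm]

lemma w_pos {n : ℕ} {d : ℝ} {Γ : Set (Euc n)} (hne : Γ.Nonempty) (hcl : IsClosed Γ) {x : Euc n}
    (hx : x ∉ Γ) : 0 < weightW n d Γ x := Real.rpow_pos_of_pos (infD_pos hne hcl hx) _

lemma A_bound {n : ℕ} {d C₁ : ℝ} {Γ : Set (Euc n)} {A : Euc n → Euc n →L[ℝ] Euc n}
    (hell : EllipticOn n d Γ A C₁) (hC₁ : 1 ≤ C₁) (hne : Γ.Nonempty) (hcl : IsClosed Γ) {x : Euc n} (hx : x ∉ Γ)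
    (ξ : Euc n) : ‖A x ξ‖ ≤ C₁ * weightW n d Γ x * ‖ξ‖ := by
  have h := (hell x hx).1 ξ (A x ξ)
  rw [euc_sum, real_inner_self_eq_norm_sq, abs_of_nonneg (by positivity)] at h
  by_cases h0 : ‖A x ξ‖ = 0
  · rw [h0]
    have := w_pos (d := d) hne hcl hx
    positivity
  · have : 0 < ‖A x ξ‖ := lt_of_le_of_ne (norm_nonneg _) (Ne.symm h0)
    nlinarith

lemma energy_k {n : ℕ} {d C₁ : ℝ}
    (hdn : d < (n : ℝ) - 1) (hC₁ : 1 ≤ C₁)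
    {Γ : Set (Euc n)} (hne : Γ.Nonempty) (hcl : IsClosed Γ)
    {A : Euc n → Euc n →L[ℝ] Euc n} (hAm : AEStronglyMeasurable A volume)
    (hell : EllipticOn n d Γ A C₁)
    {u : Euc n → ℝ} {v : Euc n → Euc n} (hW : MemW n d Γ u v)
    (hloc : LocallyIntegrable u volume)
    (hsuper : SupersolOn Γ A v Γᶜ) {χ : Euc n → ℝ}
    (hχ : ContDiff ℝ (⊤ : ℕ∞) χ) (hχc : HasCompactSupport χ) (hχs : tsupport χ ⊆ Γᶜ)
    (hχ0 : ∀ x, 0 ≤ χ x) :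
    0 ≤ ∫ x in Γᶜ, inner ℝ (A x (v x)) (FT (u x) • gradient χ x + (χ x * FT' (u x)) • v x) := by
  have hV := V_L2loc hdn hne hcl hW
  obtain ⟨M, hM1, hM, hM2⟩ := FT'_bdd
  have hts : MeasurableSet (tsupport χ) := (isClosed_tsupport χ).measurableSet
  set V := Γᶜ.indicator v with hVd
  set G := (tsupport χ).indicator (fun x => A x (V x)) with hGd
  have hGm : AEStronglyMeasurable (fun x => A x (V x)) volume := by
    have h := (ContinuousLinearMap.apply ℝ (Euc n) : Euc n →L[ℝ] (Euc n →L[ℝ] Euc n) →L[ℝ] Euc n).aestronglyMeasurable_comp₂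
      hV.1 hAm
    exact h
  -- weight bounded on the compact support
  obtain ⟨K, hK0, hK⟩ : ∃ K : ℝ, 0 ≤ K ∧ ∀ x ∈ tsupport χ, weightW n d Γ x ≤ K := by
    have hcon : ContinuousOn (weightW n d Γ) (tsupport χ) := by
      unfold weightW
      apply ContinuousOn.rpow_const (continuous_infDist_pt Γ).continuousOn
      intro x hx
      exact Or.inl (infD_pos hne hcl (hχs hx)).ne'
    obtain ⟨K, hK⟩ := hχc.isCompact.exists_bound_of_continuousOn hcon
    exact ⟨max K 0, le_max_right _ _, fun x hx => ((le_abs_self _).trans (hK x hx)).trans (le_max_left _ _)⟩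
  obtain ⟨R, hR⟩ := hχc.isCompact.isBounded.subset_ball 0
  have hG : MemLp G 2 volume := by
    have h2 : MemLp ((ball (0 : Euc n) R).indicator V) 2 volume := by
      rw [memLp_indicator_iff_restrict measurableSet_ball]
      refine ⟨hV.1.restrict, ?_⟩
      rw [eLpNorm_lt_top_iff_lintegral_rpow_enorm_lt_top (by norm_num) (by norm_num)]
      simpa using hV.2 R
    refine h2.of_le_mul (c := C₁ * K) (hGm.indicator hts) (Eventually.of_forall fun x => ?_)
    by_cases hx : x ∈ tsupport χ
    · rw [hGd, indicator_of_mem hx, indicator_of_mem (hR hx)]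
      refine (A_bound hell hC₁ hne hcl (hχs hx) _).trans ?_
      gcongr
      exact hK x hx
    · rw [hGd, indicator_of_notMem hx, norm_zero]
      positivity
  have T := KL hcl hloc hV (WG_of_MemW hW) FT_deriv FT'_cont hM2 hM hχ hχc hχs hG
  have hlim : 0 ≤ ∫ x, inner ℝ (G x) (FT (u x) • gradient χ x + (χ x * FT' (u x)) • V x) := by
    apply ge_of_tendsto' T
    intro j
    have hs : ContDiff ℝ (⊤ : ℕ∞) (fun y => FT (moll j u y) * χ y) :=
      (FT_smooth.comp (moll_contDiff j hloc)).mul hχ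
    have hc : HasCompactSupport (fun y => FT (moll j u y) * χ y) := hχc.mul_left
    have ht : tsupport (fun y => FT (moll j u y) * χ y) ⊆ tsupport χ := tsupport_mul_subset_right
    refine (hsuper _ hs hc (ht.trans hχs) fun x => mul_nonneg (FT_nonneg _) (hχ0 x)).trans_eq ?_
    have hgz : ∀ x, x ∉ tsupport χ → gradient (fun y => FT (moll j u y) * χ y) x = 0 := by
      intro x hx
      rw [← norm_eq_zero, norm_grad, norm_eq_zero]
      exact fderiv_of_notMem_tsupport ℝ fun hh => hx (ht hh)
    rw [setIntegral_eq_integral_of_forall_compl_eq_zero]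
    · congr 1; ext1 x
      rw [euc_sum]
      by_cases hx : x ∈ tsupport χ
      · rw [hGd, indicator_of_mem hx, hVd, indicator_of_mem (hχs hx)]
      · rw [hgz x hx]; simp
    · intro x hx
      rw [euc_sum, hgz x (fun hh => hx (hχs hh))]; simp
  refine hlim.trans_eq ?_
  rw [setIntegral_eq_integral_of_forall_compl_eq_zero]
  · congr 1; ext1 x
    by_cases hx : x ∈ tsupport χ
    · rw [hGd, indicator_of_mem hx, hVd, indicator_of_mem (hχs hx)]
    · have h1 : χ x = 0 := image_eq_zero_of_notMem_tsupport hx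
      have h2 : gradient χ x = 0 := by
        rw [← norm_eq_zero, norm_grad, norm_eq_zero]
        exact fderiv_of_notMem_tsupport ℝ hx
      rw [h1, h2]; simp
  · intro x hx
    have hx := fun hh => hx (hχs hh)
    have h1 : χ x = 0 := image_eq_zero_of_notMem_tsupport hx
    have h2 : gradient χ x = 0 := by
      rw [← norm_eq_zero, norm_grad, norm_eq_zero]
      exact fderiv_of_notMem_tsupport ℝ hx
    rw [h1, h2]; simp

lemma energy_zero {n : ℕ} {d C₁ : ℝ}
    (hdn : d < (n : ℝ) - 1) (hC₁ : 1 ≤ C₁)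
    {Γ : Set (Euc n)} (hne : Γ.Nonempty) (hcl : IsClosed Γ)
    {A : Euc n → Euc n →L[ℝ] Euc n} (hAm : AEStronglyMeasurable A volume)
    (hell : EllipticOn n d Γ A C₁)
    {u : Euc n → ℝ} {v : Euc n → Euc n} (hW : MemW n d Γ u v)
    (hloc : LocallyIntegrable u volume)
    (hsuper : SupersolOn Γ A v Γᶜ)
    (hH : ∫⁻ x in Γᶜ, ‖FT (u x)‖ₑ ^ 2 * ENNReal.ofReal (infDist x Γ ^ (d - ((n : ℝ) + 1))) < ⊤) :
    ∀ᵐ x ∂(volume.restrict Γᶜ), FT' (u x) • v x = 0 := by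
  have hO := hcl.isOpen_compl.measurableSet
  obtain ⟨M, hM1, hM, hM2⟩ := FT'_bdd
  obtain ⟨η, C, hC, hη1, hη2, hη3⟩ := cutoffs hne hcl
  have hum := hloc.aestronglyMeasurable.restrict (s := Γᶜ)
  have hFu : AEStronglyMeasurable (fun x => FT (u x)) (volume.restrict Γᶜ) :=
    FT_smooth.continuous.comp_aestronglyMeasurable hum
  have hF'u : AEStronglyMeasurable (fun x => FT' (u x)) (volume.restrict Γᶜ) :=
    FT'_cont.comp_aestronglyMeasurable hum
  have hvm : AEStronglyMeasurable v (volume.restrict Γᶜ) := hW.gradLocInt.aestronglyMeasurable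
  have hAv : AEStronglyMeasurable (fun x => A x (v x)) (volume.restrict Γᶜ) := by
    have h := (ContinuousLinearMap.apply ℝ (Euc n) : Euc n →L[ℝ] (Euc n →L[ℝ] Euc n) →L[ℝ] Euc n).aestronglyMeasurable_comp₂
      hvm hAm.restrict
    exact h
  have e1 : Integrable (fun x => weightW n d Γ x * ‖v x‖ ^ 2) (volume.restrict Γᶜ) := by
    refine ⟨w_meas.aestronglyMeasurable.mul (hvm.norm.pow 2), ?_⟩
    refine lt_of_eq_of_lt ?_ (W_energy hcl hW)
    congr 1; ext x
    have hw0 : 0 ≤ weightW n d Γ x := Real.rpow_nonneg infDist_nonneg _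
    rw [enorm_mul, Real.enorm_of_nonneg hw0, enorm_pow, enorm_norm]
  have e2 : Integrable (fun x => FT (u x) ^ 2 * infDist x Γ ^ (d - ((n : ℝ) + 1)))
      (volume.restrict Γᶜ) := by
    refine ⟨(hFu.pow 2).mul (measurable_infDist.pow_const _).aestronglyMeasurable, ?_⟩
    refine lt_of_eq_of_lt ?_ hH
    congr 1; ext x
    rw [enorm_mul, enorm_pow, Real.enorm_of_nonneg (Real.rpow_nonneg infDist_nonneg _)]
  have T : Tendsto (fun k => ∫ x in Γᶜ, inner ℝ (A x (v x))
      (FT (u x) • gradient (η k) x + (η k x * FT' (u x)) • v x)) atTop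
      (𝓝 (∫ x in Γᶜ, inner ℝ (A x (v x)) (FT' (u x) • v x))) := by
    apply tendsto_integral_of_dominated_convergence
      (fun x => C₁ * C * (weightW n d Γ x * ‖v x‖ ^ 2 + FT (u x) ^ 2 * infDist x Γ ^ (d - ((n : ℝ) + 1)))
        + C₁ * M * (weightW n d Γ x * ‖v x‖ ^ 2))
    · intro k
      obtain ⟨a1, a2, a3, a4⟩ := hη1 k
      apply hAv.inner
      exact (hFu.smul (grad_cont a1).aestronglyMeasurable).add
        ((a1.continuous.aestronglyMeasurable.mul hF'u).smul hvm)
    · exact ((e1.add e2).const_mul _).add (e1.const_mul _)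
    · intro k
      obtain ⟨a1, a2, a3, a4⟩ := hη1 k
      filter_upwards [ae_restrict_mem hO] with x hx
      have hw := w_pos (d := d) hne hcl hx
      have hp := infD_pos hne hcl hx
      refine (norm_inner_le_norm _ _).trans ?_
      have h1 := A_bound hell hC₁ hne hcl hx (v x)
      have h2 : ‖FT (u x) • gradient (η k) x + (η k x * FT' (u x)) • v x‖ ≤
          FT (u x) * (C * (infDist x Γ)⁻¹) + M * ‖v x‖ := by
        refine (norm_add_le _ _).trans ?_
        rw [norm_smul, norm_smul, Real.norm_of_nonneg (FT_nonneg _)]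
        have q1 := hη2 k x hx
        have q2 : ‖η k x * FT' (u x)‖ ≤ M := by
          rw [norm_mul, Real.norm_of_nonneg (a4 x).1]
          calc η k x * ‖FT' (u x)‖ ≤ 1 * M := by
                gcongr
                · exact (a4 x).2
                · exact hM _
            _ = M := one_mul _
        have q3 := FT_nonneg (u x)
        gcongr
      have h3 : infDist x Γ ^ (d - ((n : ℝ) + 1)) = weightW n d Γ x * ((infDist x Γ)⁻¹) ^ 2 := by
        unfold weightW
        rw [← Real.rpow_neg_one, ← Real.rpow_natCast, ← Real.rpow_mul hp.le, ← Real.rpow_add hp]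
        congr 1; push_cast; ring
      have h4 : 0 ≤ FT (u x) * (C * (infDist x Γ)⁻¹) + M * ‖v x‖ := (norm_nonneg _).trans h2
      rw [h3]
      set w := weightW n d Γ x
      set a := ‖v x‖
      set b := FT (u x) * (infDist x Γ)⁻¹ with hb
      calc _ ≤ (C₁ * w * a) * (FT (u x) * (C * (infDist x Γ)⁻¹) + M * a) := by gcongr
        _ = C₁ * C * (w * (a * b)) + C₁ * M * (w * a ^ 2) := by rw [hb]; ring
        _ ≤ C₁ * C * (w * (a ^ 2 + b ^ 2)) + C₁ * M * (w * a ^ 2) := by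
            gcongr
            nlinarith [sq_nonneg (a - b), sq_nonneg a, sq_nonneg b]
        _ = _ := by rw [hb]; ring
    · filter_upwards [ae_restrict_mem hO] with x hx
      apply tendsto_const_nhds.congr'
      filter_upwards [hη3 x hx] with k hk
      rw [hk.1, hk.2]; simp
  have h0 : 0 ≤ ∫ x in Γᶜ, inner ℝ (A x (v x)) (FT' (u x) • v x) := by
    apply ge_of_tendsto' T
    intro k
    obtain ⟨a1, a2, a3, a4⟩ := hη1 k
    exact energy_k hdn hC₁ hne hcl hAm hell hW hloc hsuper a1 a2 a3 fun x => (a4 x).1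
  have hpos : ∀ x, x ∉ Γ → 0 ≤ inner ℝ (A x (v x)) (v x) ∧
      (inner ℝ (A x (v x)) (v x) = 0 → v x = 0) := by
    intro x hx
    have hw := w_pos (d := d) hne hcl hx
    have h := (hell x hx).2 (v x)
    rw [euc_sum] at h
    have hC1 : 0 < C₁⁻¹ := by positivity
    have h2 : 0 ≤ C₁⁻¹ * weightW n d Γ x * ‖v x‖ ^ 2 := by positivity
    refine ⟨h2.trans h, fun h3 => ?_⟩
    rw [h3] at h
    have h4 := le_antisymm h h2
    have h5 : C₁⁻¹ * weightW n d Γ x ≠ 0 := (mul_pos hC1 hw).ne'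
    have h6 := (mul_eq_zero.1 h4).resolve_left h5
    simpa using h6
  have hgi : Integrable (fun x => -inner ℝ (A x (v x)) (FT' (u x) • v x)) (volume.restrict Γᶜ) := by
    refine (e1.const_mul (C₁ * M)).mono (hAv.inner (hF'u.smul hvm)).neg ?_
    filter_upwards [ae_restrict_mem hO] with x hx
    have hw := w_pos (d := d) hne hcl hx
    rw [norm_neg]
    refine (norm_inner_le_norm _ _).trans ?_
    rw [norm_smul]
    have h1 := A_bound hell hC₁ hne hcl hx (v x)
    calc ‖A x (v x)‖ * (‖FT' (u x)‖ * ‖v x‖) ≤ (C₁ * weightW n d Γ x * ‖v x‖) * (M * ‖v x‖) := by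
          gcongr; exact hM _
      _ = C₁ * M * (weightW n d Γ x * ‖v x‖ ^ 2) := by ring
      _ ≤ _ := le_abs_self _
  have hnn : 0 ≤ᵐ[volume.restrict Γᶜ] fun x => -inner ℝ (A x (v x)) (FT' (u x) • v x) := by
    filter_upwards [ae_restrict_mem hO] with x hx
    rw [inner_smul_right]
    have := (hpos x hx).1
    have h2 := FT'_nonpos (u x)
    show 0 ≤ _
    nlinarith
  have hz : ∫ x in Γᶜ, -inner ℝ (A x (v x)) (FT' (u x) • v x) = 0 := by
    apply le_antisymm
    · rw [integral_neg]; linarith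
    · exact integral_nonneg_of_ae hnn
  rw [integral_eq_zero_iff_of_nonneg_ae hnn hgi] at hz
  filter_upwards [hz, ae_restrict_mem hO] with x hx hxO
  simp only [Pi.zero_apply, neg_eq_zero, inner_smul_right, mul_eq_zero] at hx
  rcases hx with hx | hx
  · rw [hx, zero_smul]
  · rw [(hpos x hxO).2 hx, smul_zero]

lemma const_of_WG {n : ℕ} {f : Euc n → ℝ} (hf : LocallyIntegrable f volume)
    (h : WG univ f (fun _ => 0)) : ∃ c, ∀ᵐ x, f x = c := by
  have hc : ∀ j x, moll j f x = moll j f 0 := by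
    intro j x
    apply is_const_of_fderiv_eq_zero (𝕜 := ℝ) ((moll_contDiff j hf).differentiable (by simp))
    intro y
    have hg := (moll_grad j hf h (x := y) (subset_univ _)).gradient
    rw [← norm_eq_zero, ← norm_grad, hg, moll_eq]
    simp
  have hae := moll_ae hf
  obtain ⟨x0, hx0⟩ := hae.exists
  refine ⟨f x0, ?_⟩
  filter_upwards [hae] with x hx
  apply tendsto_nhds_unique hx
  simp_rw [hc] at hx0 ⊢
  exact hx0

lemma trace_le {n : ℕ} {u : Euc n → ℝ} (hu : LocallyIntegrable u volume) {s t : ℝ}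
    (h : ∀ᵐ x, u x ≤ s) {y : Euc n} (ht : HasTraceAt u y t) : t ≤ s := by
  apply le_of_tendsto ht
  filter_upwards [self_mem_nhdsWithin] with ρ hρ
  have hi : IntegrableOn u (ball y ρ) volume :=
    (hu.integrableOn_isCompact (isCompact_closedBall y ρ)).mono_set ball_subset_closedBall
  have h1 : ∫ x in ball y ρ, u x ≤ ∫ x in ball y ρ, s := by
    apply integral_mono_ae hi
    · exact integrableOn_const measure_ball_lt_top.ne
    · exact ae_restrict_of_ae h
  have hpos : 0 < volume.real (ball y ρ) :=
    ENNReal.toReal_pos (measure_ball_pos volume y hρ).ne' measure_ball_lt_top.ne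
  rw [setAverage_eq, smul_eq_mul]
  rw [setIntegral_const, smul_eq_mul] at h1
  rw [inv_mul_le_iff₀ hpos]
  exact h1

/-- the maximum principle for supersolutions with nonnegative trace. -/
theorem statement11 (n : ℕ) (hn : 2 ≤ n) (d C₀ C₁ : ℝ) (hd0 : 0 < d)
    (hdn : d < (n : ℝ) - 1) (hC₀ : 1 ≤ C₀) (hC₁ : 1 ≤ C₁)
    (Γ : Set (Euc n)) (hne : Γ.Nonempty) (hcl : IsClosed Γ)
    (hAR : AhlforsRegular n d C₀ Γ)
    (A : Euc n → Euc n →L[ℝ] Euc n) (hAm : AEStronglyMeasurable A volume)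
    (hell : EllipticOn n d Γ A C₁)
    (u : Euc n → ℝ) (v : Euc n → Euc n) (hW : MemW n d Γ u v)
    (hloc : LocallyIntegrable u volume)
    (hsuper : SupersolOn Γ A v Γᶜ)
    (htrace : ∀ᵐ x ∂(μH[d].restrict Γ), ∃ t : ℝ, 0 ≤ t ∧ HasTraceAt u x t) :
    ∀ᵐ x ∂(volume.restrict Γᶜ), 0 ≤ u x := by
  have hvol := vol_zero hdn hne hAR
  have hδ := dinv_int hn hd0 hdn hC₀ hne hcl hAR
  have hV := V_L2loc hdn hne hcl hW
  have hWG0 := WG_of_MemW hW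
  have hWG := WG_univ hne hcl hvol hδ hloc hV hWG0
  have hH := hardy hn hdn hC₀ hne hcl hAR hW hloc hWG htrace
  have hz := energy_zero hdn hC₁ hne hcl hAm hell hW hloc hsuper hH
  obtain ⟨M, hM1, hM, hM2⟩ := FT'_bdd
  have hFW := chain_global hne hcl hvol hδ hloc hV hWG0 FT_smooth FT_deriv FT'_cont hM2 hM
  have hum := hloc.aestronglyMeasurable
  have hFu : AEStronglyMeasurable (fun x => FT (u x)) volume :=
    FT_smooth.continuous.comp_aestronglyMeasurable hum
  have hFl : LocallyIntegrable (fun x => FT (u x)) volume := by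
    refine (locallyIntegrable_const (1 : ℝ)).mono hFu (Eventually.of_forall fun x => ?_)
    rw [Real.norm_of_nonneg (FT_nonneg _), norm_one]
    exact FT_le_one _
  have hz2 : ∀ᵐ x, FT' (u x) • Γᶜ.indicator v x = 0 := by
    rw [ae_restrict_iff' hcl.isOpen_compl.measurableSet] at hz
    filter_upwards [hz] with x hx
    by_cases hxΓ : x ∈ Γᶜ
    · rw [indicator_of_mem hxΓ]; exact hx hxΓ
    · rw [indicator_of_notMem hxΓ, smul_zero]
  have hFW0 : WG univ (fun x => FT (u x)) (fun _ => 0) := by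
    intro φ h1 h2 h3
    rw [hFW φ h1 h2 h3]
    congr 1
    apply integral_congr_ae
    filter_upwards [hz2] with x hx
    rw [hx]
  obtain ⟨c, hc⟩ := const_of_WG hFl hFW0
  by_cases hc0 : c ≤ 0
  · apply ae_restrict_of_ae
    filter_upwards [hc] with x hx
    by_contra hneg
    have := FT_pos (not_le.1 hneg)
    linarith
  · exfalso
    push Not at hc0
    -- find s > 0
    have hF0 : FT 0 = 0 := FT_zero le_rfl
    have hev : ∀ᶠ t in 𝓝 (0 : ℝ), FT t < c := by
      have := FT_smooth.continuous.tendsto 0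
      rw [hF0] at this
      exact this.eventually_lt_const hc0
    obtain ⟨s, hs, hsb⟩ := Metric.eventually_nhds_iff.1 hev
    have hle : ∀ᵐ x, u x ≤ -s := by
      filter_upwards [hc] with x hx
      by_contra hcon
      push Not at hcon
      rcases le_or_gt 0 (u x) with h | h
      · rw [FT_zero h] at hx; linarith
      · have := hsb (y := u x) (by rw [Real.dist_eq, sub_zero, abs_of_neg h]; linarith)
        linarith
    obtain ⟨y0, hy0⟩ := id hne
    have hσ : NeBot (ae (μH[d].restrict Γ)) := by
      rw [ae_neBot]
      intro h0
      have h1 := (sig_ball hAR hy0 one_pos).1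
      rw [h0] at h1
      simp at h1
      linarith
    obtain ⟨y, t, ht0, ht⟩ := htrace.exists
    have := trace_le hloc hle ht
    linarith
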